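/- Let N = 2 and m > 1, and let u be a radial very weak solution of Eq. (E) with radially symmetric initial datum u₀ ∈ L^∞(ℝ²) ∩ C(ℝ²), u₀ ≥ 0, satisfying u₀(0) = K > 0 and lim_{|x|→∞} u₀(x) = 0. Then there exists a continuous function f : ℝ → [0,∞) with lim_{ξ→−∞} f(ξ) = K and lim_{ξ→+∞} f(ξ) = 0, such that, defining the radially symmetric profile W(x,t) = f(log|x| / √t) for x ≠ 0 and W(0,t) = K for all t > 0, one has lim_{t→∞} sup_{x ∈ ℝ²} |u(x,t) − W(x,t)| = 0. In particular, u(0,t) = K for every t > 0, i.e., the value at the origin does not change along the evolution. -/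

import Mathlib

open Real MeasureTheory Set Filter Topology

noncomputable section

/-- `v` (in radial variables: `v r t`, `r = |x|`) is a radial very weak solution of the
nonhomogeneous porous medium equation `|x|^{-2} ∂ₜ u = Δ(u^m)` in dimension `N`,
with initial datum `v₀`: `v` is nonnegative, continuous on `ℝ^N × (0,∞)`, bounded on
`ℝ^N × [0,T]` for every `T`, and satisfies the very weak (integral) formulation against
every nonnegative test function `φ ∈ C^{2,1}` vanishing on the lateral boundary. -/
def IsRadialVeryWeakSolution (N : ℕ) (m : ℝ) (v : ℝ → ℝ → ℝ) (v₀ : ℝ → ℝ) : Prop :=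
  (∀ r t, 0 ≤ v r t) ∧
  ContinuousOn (fun p : ℝ × ℝ => v p.1 p.2) (Set.Ici 0 ×ˢ Set.Ioi 0) ∧
  (∀ T : ℝ, 0 < T → ∃ C : ℝ, ∀ r ∈ Set.Ici (0 : ℝ), ∀ t ∈ Set.Icc (0 : ℝ) T, v r t ≤ C) ∧
  ∀ (r₁ r₂ T : ℝ) (φ φt φr φrr : ℝ → ℝ → ℝ),
    0 < r₁ → r₁ < r₂ → 0 < T →
    (∀ r t, 0 ≤ φ r t) →
    (∀ r t, HasDerivAt (fun τ => φ r τ) (φt r t) t) →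
    (∀ r t, HasDerivAt (fun ρ => φ ρ t) (φr r t) r) →
    (∀ r t, HasDerivAt (fun ρ => φr ρ t) (φrr r t) r) →
    Continuous (fun p : ℝ × ℝ => φ p.1 p.2) →
    Continuous (fun p : ℝ × ℝ => φt p.1 p.2) →
    Continuous (fun p : ℝ × ℝ => φr p.1 p.2) →
    Continuous (fun p : ℝ × ℝ => φrr p.1 p.2) →
    (∀ t ∈ Set.Ico (0 : ℝ) T, φ r₁ t = 0 ∧ φ r₂ t = 0) →
    (∫ t in (0 : ℝ)..T, ∫ r in r₁..r₂,
        (r ^ (-2 : ℝ) * v r t * φt r t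
          + (φrr r t + (((N : ℝ) - 1) / r) * φr r t) * v r t ^ m) * r ^ ((N : ℝ) - 1))
      = (∫ r in r₁..r₂,
          r ^ (-2 : ℝ) * (v r T * φ r T - v₀ r * φ r 0) * r ^ ((N : ℝ) - 1))
        + ∫ t in (0 : ℝ)..T,
            (r₂ ^ ((N : ℝ) - 1) * v r₂ t ^ m * φr r₂ t
              - r₁ ^ ((N : ℝ) - 1) * v r₁ t ^ m * φr r₁ t)

/-- Integrated formulation of the one-dimensional porous medium equation. -/
structure PSol (m : ℝ) (w : ℝ → ℝ → ℝ) (w₀ : ℝ → ℝ) (z z1 : ℝ → ℝ → ℝ) : Prop where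
  nonneg : ∀ s t, 0 ≤ w s t
  bdd : ∀ T : ℝ, 0 < T → ∃ C : ℝ, 0 ≤ C ∧ ∀ s, ∀ t ∈ Set.Ioc (0 : ℝ) T, w s t ≤ C
  zero : ∀ s, z s 0 = 0
  ct : ∀ s, ContinuousWithinAt (z s) (Ici 0) 0
  dt : ∀ s t, 0 < t → HasDerivAt (z s) (w s t ^ m) t
  ds : ∀ t, 0 < t → ∀ s, HasDerivAt (fun x => z x t) (z1 s t) s
  dss : ∀ t, 0 < t → ∀ s, HasDerivAt (fun x => z1 x t) (w s t - w₀ s) s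
  c0 : Continuous w₀

lemma sd_min {f f' : ℝ → ℝ} {a c δ : ℝ} (hδ : 0 < δ)
    (hmin : ∀ x, |x - a| < δ → f a ≤ f x) (hf : ∀ x, HasDerivAt f (f' x) x)
    (hf' : HasDerivAt f' c a) : 0 ≤ c := by
  by_contra hc
  push Not at hc
  have hloc : IsLocalMin f a := by
    filter_upwards [Metric.ball_mem_nhds a hδ] with x hx
    exact hmin x (by simpa [Real.dist_eq] using hx)
  have h0 : f' a = 0 := hloc.hasDerivAt_eq_zero (hf a)
  have hd : deriv f = f' := funext fun x => (hf x).deriv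
  have hmax : IsLocalMax f a := by
    apply isLocalMax_of_deriv_deriv_neg
    · rw [hd, hf'.deriv]; exact hc
    · rw [hd]; exact h0
    · exact (hf a).continuousAt
  have hconst : f =ᶠ[𝓝 a] fun _ => f a := by
    filter_upwards [hloc, hmax] with x h1 h2
    exact le_antisymm h2 h1
  have h1 : f' =ᶠ[𝓝 a] fun _ => 0 := by
    have := hconst.deriv
    rw [hd] at this
    filter_upwards [this] with x hx
    rw [hx]; simp
  have h2 : HasDerivAt f' 0 a := (hasDerivAt_const a (0:ℝ)).congr_of_eventuallyEq h1
  have := hf'.unique h2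
  linarith

lemma td_min {f : ℝ → ℝ} {a c : ℝ} (ha : 0 < a)
    (hmin : ∀ t, 0 ≤ t → t ≤ a → f a ≤ f t) (hf : HasDerivAt f c a) : c ≤ 0 := by
  by_contra hc
  push Not at hc
  have h1 : Tendsto (slope f a) (𝓝[<] a) (𝓝 c) :=
    (hasDerivAt_iff_tendsto_slope.1 hf).mono_left
      (nhdsWithin_mono _ (fun x hx => ne_of_lt hx))
  have h2 : ∀ᶠ x in 𝓝[<] a, slope f a x ≤ 0 := by
    have : ∀ᶠ x in 𝓝[<] a, x ∈ Ioo 0 a := Ioo_mem_nhdsLT ha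
    filter_upwards [this] with x hx
    rw [slope_def_field]
    exact div_nonpos_of_nonneg_of_nonpos (by linarith [hmin x hx.1.le hx.2.le]) (by linarith [hx.2])
  have := le_of_tendsto h1 h2
  linarith

lemma rpow_lip {m : ℝ} (hm : 1 < m) {M : ℝ} (hM : 0 ≤ M) : ∃ L : ℝ, 0 ≤ L ∧
    ∀ a b : ℝ, 0 ≤ a → a ≤ M → 0 ≤ b → b ≤ M → |a ^ m - b ^ m| ≤ L * |a - b| := by
  refine ⟨m * M ^ (m - 1), by positivity, fun a b ha haM hb hbM => ?_⟩
  have := Convex.norm_image_sub_le_of_norm_hasDerivWithin_le (s := Icc 0 M) (f := fun x : ℝ => x ^ m)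
    (f' := fun x => m * x ^ (m - 1)) (C := m * M ^ (m - 1)) (x := b) (y := a)
    (fun x hx => (Real.hasDerivAt_rpow_const (Or.inr hm.le)).hasDerivWithinAt)
    (fun x hx => by
      rw [Real.norm_eq_abs, abs_of_nonneg (by have := hx.1; positivity)]
      have h1 : x ^ (m - 1) ≤ M ^ (m - 1) := Real.rpow_le_rpow hx.1 hx.2 (by linarith)
      gcongr) (convex_Icc 0 M) ⟨hb, hbM⟩ ⟨ha, haM⟩
  simpa [Real.norm_eq_abs] using this

/-- One-sided Lipschitz bound. -/
lemma rpow_lip' {m L a b k M : ℝ} (hm : 1 < m) (hL0 : 0 ≤ L)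
    (hL : ∀ a b : ℝ, 0 ≤ a → a ≤ M → 0 ≤ b → b ≤ M → |a ^ m - b ^ m| ≤ L * |a - b|)
    (ha : 0 ≤ a) (haM : a ≤ M) (hb : 0 ≤ b) (hbM : b ≤ M) (hk : 0 ≤ k) (h : a - b ≤ k) :
    a ^ m - b ^ m ≤ L * k := by
  rcases le_total a b with hab | hab
  · have : a ^ m ≤ b ^ m := Real.rpow_le_rpow ha hab (by linarith)
    have := mul_nonneg hL0 hk
    linarith
  · have h1 := hL a b ha haM hb hbM
    rw [abs_of_nonneg (sub_nonneg.2 hab)] at h1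
    have := mul_le_mul_of_nonneg_left h hL0
    linarith [le_abs_self (a ^ m - b ^ m)]

lemma abs_sub_rpow_le {m a b : ℝ} (hm : 1 < m) (ha : 0 ≤ a) (hb : 0 ≤ b) :
    |a - b| ^ m ≤ |a ^ m - b ^ m| := by
  have key : ∀ x y : ℝ, 0 ≤ x → x ≤ y → |y - x| ^ m ≤ |y ^ m - x ^ m| := by
    intro x y hx hxy
    have := Real.add_rpow_le_rpow_add (sub_nonneg.2 hxy) hx hm.le
    rw [sub_add_cancel] at this
    rw [abs_of_nonneg (sub_nonneg.2 hxy)]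
    have h2 := le_abs_self (y ^ m - x ^ m)
    linarith
  rcases le_total a b with h | h
  · rw [abs_sub_comm, abs_sub_comm (a ^ m)]; exact key a b ha h
  · exact key b a hb h

namespace PSol
variable {m : ℝ} {w : ℝ → ℝ → ℝ} {w₀ : ℝ → ℝ} {z z1 : ℝ → ℝ → ℝ}

lemma contT (h : PSol m w w₀ z z1) (s : ℝ) : ContinuousOn (z s) (Ici 0) := by
  intro t ht
  rcases eq_or_lt_of_le (show (0:ℝ) ≤ t from ht) with h0 | h0
  · rw [← h0]; exact h.ct s
  · exact (h.dt s t h0).continuousAt.continuousWithinAt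

lemma lip (h : PSol m w w₀ z z1) (hm : 1 < m) {T C : ℝ}
    (hC : ∀ s, ∀ t ∈ Set.Ioc (0 : ℝ) T, w s t ≤ C) (s : ℝ)
    {a b : ℝ} (ha : 0 ≤ a) (hab : a ≤ b) (hb : b ≤ T) :
    0 ≤ z s b - z s a ∧ z s b - z s a ≤ C ^ m * (b - a) := by
  have hcont : ContinuousOn (z s) (Icc 0 T) := (h.contT s).mono Icc_subset_Ici_self
  have hdiff : DifferentiableOn ℝ (z s) (interior (Icc 0 T)) := by
    rw [interior_Icc]
    exact fun t ht => (h.dt s t ht.1).differentiableAt.differentiableWithinAt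
  constructor
  · have := (convex_Icc 0 T).mul_sub_le_image_sub_of_le_deriv hcont hdiff (C := 0)
      (fun t ht => by
        rw [interior_Icc] at ht
        rw [(h.dt s t ht.1).deriv]
        exact Real.rpow_nonneg (h.nonneg s t) m) a ⟨ha, hab.trans hb⟩ b ⟨ha.trans hab, hb⟩ hab
    linarith
  · exact (convex_Icc 0 T).image_sub_le_mul_sub_of_deriv_le hcont hdiff (C := C ^ m)
      (fun t ht => by
        rw [interior_Icc] at ht
        rw [(h.dt s t ht.1).deriv]
        exact Real.rpow_le_rpow (h.nonneg s t) (hC s t ⟨ht.1, ht.2.le⟩) (by linarith))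
      a ⟨ha, hab.trans hb⟩ b ⟨ha.trans hab, hb⟩ hab

lemma contJoint (h : PSol m w w₀ z z1) (hm : 1 < m) {T : ℝ} (hT : 0 < T) :
    ContinuousOn (fun p : ℝ × ℝ => z p.1 p.2) (univ ×ˢ Icc 0 T) := by
  obtain ⟨C, hC0, hC⟩ := h.bdd T hT
  have hC1 : 0 ≤ C ^ m := Real.rpow_nonneg hC0 m
  apply continuousOn_prod_of_continuousOn_lipschitzOnWith' (K := ⟨C ^ m, hC1⟩)
  · intro a _
    apply LipschitzOnWith.of_dist_le_mul
    intro x hx y hy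
    rw [Real.dist_eq, Real.dist_eq]
    show |z a x - z a y| ≤ C ^ m * |x - y|
    rcases le_total x y with hxy | hxy
    · have := h.lip hm hC a hx.1 hxy hy.2
      rw [abs_sub_comm, abs_of_nonneg this.1, abs_sub_comm, abs_of_nonneg (sub_nonneg.2 hxy)]
      exact this.2
    · have := h.lip hm hC a hy.1 hxy hx.2
      rw [abs_of_nonneg this.1, abs_of_nonneg (sub_nonneg.2 hxy)]
      exact this.2
  · intro b hb
    rcases eq_or_lt_of_le hb.1 with h0 | h0
    · subst h0
      simp only [h.zero]
      exact continuousOn_const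
    · exact fun s _ => (h.ds b h0 s).continuousAt.continuousWithinAt

lemma const {m : ℝ} {K : ℝ} (hK : 0 ≤ K) :
    PSol m (fun _ _ => K) (fun _ => K) (fun _ t => K ^ m * t) (fun _ _ => 0) where
  nonneg := fun _ _ => hK
  bdd := fun _ _ => ⟨K, hK, fun _ _ _ => le_rfl⟩
  zero := fun _ => by simp
  ct := fun _ => by fun_prop
  dt := fun s t _ => by simpa using (hasDerivAt_id t).const_mul (K ^ m)
  ds := fun t _ s => hasDerivAt_const _ _
  dss := fun t _ s => by simpa using hasDerivAt_const s (0:ℝ)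
  c0 := continuous_const

lemma scale (h : PSol m w w₀ z z1) {c l μ : ℝ} (hc : 0 < c) (hμ : 0 < μ)
    (hrel : c ^ m * l ^ 2 = c * μ) :
    PSol m (fun s t => c * w (l * s) (μ * t)) (fun s => c * w₀ (l * s))
      (fun s t => c ^ m / μ * z (l * s) (μ * t)) (fun s t => c ^ m / μ * l * z1 (l * s) (μ * t)) where
  nonneg := fun s t => mul_nonneg hc.le (h.nonneg _ _)
  bdd := fun T hT => by
    obtain ⟨C, hC0, hC⟩ := h.bdd (μ * T) (by positivity)
    refine ⟨c * C, by positivity, fun s t ht => ?_⟩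
    have := hC (l * s) (μ * t) ⟨mul_pos hμ ht.1, by gcongr; exact ht.2⟩
    gcongr
  zero := fun s => by simp [h.zero]
  ct := fun s => by
    apply ContinuousWithinAt.const_mul
    have h1 := h.ct (l * s)
    have h2 : ContinuousWithinAt (fun t : ℝ => μ * t) (Ici 0) 0 := by fun_prop
    refine ContinuousWithinAt.comp (t := Ici 0) (by simpa using h1) h2 ?_
    intro t ht
    exact mul_nonneg hμ.le ht
  dt := fun s t ht => by
    have h1 := h.dt (l * s) (μ * t) (by positivity)
    have h2 : HasDerivAt (fun t : ℝ => μ * t) μ t := by simpa using (hasDerivAt_id t).const_mul μ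
    have h3 := (h1.comp t h2).const_mul (c ^ m / μ)
    refine h3.congr_deriv ?_
    rw [Real.mul_rpow hc.le (h.nonneg _ _)]
    field_simp
  ds := fun t ht s => by
    have h1 := h.ds (μ * t) (by positivity) (l * s)
    have h2 : HasDerivAt (fun s : ℝ => l * s) l s := by simpa using (hasDerivAt_id s).const_mul l
    have h3 := (HasDerivAt.comp s h1 h2).const_mul (c ^ m / μ)
    refine h3.congr_deriv ?_
    ring
  dss := fun t ht s => by
    have h1 := h.dss (μ * t) (by positivity) (l * s)
    have h2 : HasDerivAt (fun s : ℝ => l * s) l s := by simpa using (hasDerivAt_id s).const_mul l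
    have h3 := (HasDerivAt.comp s h1 h2).const_mul (c ^ m / μ * l)
    refine h3.congr_deriv ?_
    have : c = c ^ m * l ^ 2 / μ := by rw [hrel]; field_simp
    have e : c * w (l * s) (μ * t) - c * w₀ (l * s) =
      (c ^ m * l ^ 2 / μ) * (w (l * s) (μ * t) - w₀ (l * s)) := by rw [← this]; ring
    rw [e]; ring
  c0 := by have := h.c0; fun_prop

end PSol

/-- A double primitive of a continuous function. -/
lemma exists_double_prim {g : ℝ → ℝ} (hg : Continuous g) (s₀ : ℝ) : ∃ p p1 : ℝ → ℝ,
    (∀ s, HasDerivAt p (p1 s) s) ∧ (∀ s, HasDerivAt p1 (g s) s) ∧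
    ∀ ρ, 0 < ρ → ∀ s, |s - s₀| ≤ ρ → |p s| ≤ ρ * ∫ y in (s₀ - ρ)..(s₀ + ρ), |g y| := by
  have h1 : ∀ s, HasDerivAt (fun s => ∫ y in s₀..s, g y) (g s) s := fun s =>
    hg.integral_hasStrictDerivAt s₀ s |>.hasDerivAt
  have hc : Continuous (fun s => ∫ y in s₀..s, g y) :=
    continuous_iff_continuousAt.2 fun s => (h1 s).continuousAt
  refine ⟨fun s => ∫ x in s₀..s, ∫ y in s₀..x, g y, fun s => ∫ y in s₀..s, g y,
    fun s => hc.integral_hasStrictDerivAt s₀ s |>.hasDerivAt, h1, ?_⟩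
  intro ρ hρ s hs
  have hgi : ∀ a b, IntervalIntegrable (fun y => |g y|) volume a b :=
    fun a b => hg.abs.intervalIntegrable a b
  have hb : ∀ x, |x - s₀| ≤ ρ → |∫ y in s₀..x, g y| ≤ ∫ y in (s₀ - ρ)..(s₀ + ρ), |g y| := by
    intro x hx
    rw [abs_le] at hx
    have h2 : |∫ y in s₀..x, g y| ≤ |∫ y in s₀..x, (|g y|)| := by
      simpa [Real.norm_eq_abs] using
        intervalIntegral.norm_integral_le_abs_integral_norm (f := g) (a := s₀) (b := x) (μ := volume)
    refine h2.trans ?_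
    refine intervalIntegral.abs_integral_mono_interval ?_ ?_ (hgi (s₀ - ρ) (s₀ + ρ)) |>.trans (le_of_eq ?_)
    · rw [uIoc_of_le (by linarith : s₀ - ρ ≤ s₀ + ρ)]
      intro y hy
      rw [mem_uIoc] at hy
      rcases hy with hy | hy
      · exact ⟨by linarith, by linarith⟩
      · exact ⟨by linarith, by linarith⟩
    · exact Eventually.of_forall fun y => abs_nonneg _
    · exact abs_of_nonneg (intervalIntegral.integral_nonneg (by linarith) fun _ _ => abs_nonneg _)
  have h3 := intervalIntegral.norm_integral_le_of_norm_le_const (a := s₀) (b := s)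
    (f := fun x => ∫ y in s₀..x, g y) (C := ∫ y in (s₀ - ρ)..(s₀ + ρ), |g y|) (by
      intro x hx
      apply hb
      rw [mem_uIoc] at hx
      rw [abs_le] at hs ⊢
      rcases hx with hx | hx
      · exact ⟨by linarith, by linarith⟩
      · exact ⟨by linarith, by linarith⟩)
  rw [Real.norm_eq_abs] at h3
  refine h3.trans ?_
  rw [mul_comm]
  apply mul_le_mul_of_nonneg_right hs
  exact intervalIntegral.integral_nonneg (by linarith) fun _ _ => abs_nonneg _

/-- three-point functional is nonnegative for concave functions -/
lemma three_point_concave {p p1 g : ℝ → ℝ} (hp : ∀ s, HasDerivAt p (p1 s) s)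
    (hp1 : ∀ s, HasDerivAt p1 (g s) s) (hg : ∀ s, g s ≤ 0) {x q y : ℝ} (hxq : x ≤ q) (hqy : q ≤ y) :
    0 ≤ (y - x) * p q - (y - q) * p x - (q - x) * p y := by
  have hconc : ConcaveOn ℝ univ p := by
    apply concaveOn_univ_of_deriv2_nonpos
    · exact fun s => (hp s).differentiableAt
    · rw [show deriv p = p1 from funext fun s => (hp s).deriv]
      exact fun s => (hp1 s).differentiableAt
    · intro s
      simp only [Function.iterate_succ, Function.iterate_zero, Function.comp, id]
      rw [show deriv p = p1 from funext fun s => (hp s).deriv, (hp1 s).deriv]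
      exact hg s
  rcases eq_or_lt_of_le (hxq.trans hqy) with h | h
  · have : x = q := le_antisymm hxq (by linarith)
    have h2 : q = y := le_antisymm hqy (by linarith)
    subst this; subst h2; simp
  · have hyx : 0 < y - x := by linarith
    have := hconc.2 (mem_univ x) (mem_univ y) (show (0:ℝ) ≤ (y - q) / (y - x) by apply div_nonneg <;> linarith)
      (show (0:ℝ) ≤ (q - x) / (y - x) by apply div_nonneg <;> linarith) (by field_simp; ring)
    simp only [smul_eq_mul] at this
    have e : (y - q) / (y - x) * x + (q - x) / (y - x) * y = q := by field_simp; ring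
    rw [e] at this
    have h3 := mul_le_mul_of_nonneg_left this hyx.le
    have e2 : (y - x) * ((y - q) / (y - x) * p x + (q - x) / (y - x) * p y) =
      (y - q) * p x + (q - x) * p y := by field_simp
    linarith

lemma size_bound {ε B x q y a : ℝ} (hε : 0 < ε) (hB0 : 0 ≤ B)
    (hsum : ε * (x ^ 2 + q ^ 2 + y ^ 2) ≤ 2 * B * (y - x))
    (ha : a ^ 2 ≤ x ^ 2 + q ^ 2 + y ^ 2) : |a| ≤ 4 * B / ε := by
  set n := Real.sqrt (x ^ 2 + q ^ 2 + y ^ 2) with hn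
  have hn2 : n ^ 2 = x ^ 2 + q ^ 2 + y ^ 2 := Real.sq_sqrt (by positivity)
  have hn0 : 0 ≤ n := Real.sqrt_nonneg _
  have hx : |x| ≤ n := Real.abs_le_sqrt (by nlinarith [sq_nonneg q, sq_nonneg y])
  have hy : |y| ≤ n := Real.abs_le_sqrt (by nlinarith [sq_nonneg q, sq_nonneg x])
  have han : |a| ≤ n := Real.abs_le_sqrt ha
  refine han.trans ?_
  rw [le_div_iff₀ hε]
  have h1 : ε * n ^ 2 ≤ 2 * B * (2 * n) := by
    rw [hn2]
    refine hsum.trans ?_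
    apply mul_le_mul_of_nonneg_left _ (by positivity)
    linarith [neg_abs_le x, le_abs_self y]
  rcases eq_or_lt_of_le hn0 with h0 | h0
  · rw [← h0]; simpa using hB0
  · have : n * (n * ε) ≤ n * (4 * B) := by linarith
    exact le_of_mul_le_mul_left this h0

set_option maxHeartbeats 1000000 in
lemma three_point_max {E E1 d₂ τ : ℝ → ℝ → ℝ} {T B L : ℝ} (hT : 0 < T) (hB0 : 0 ≤ B) (hL0 : 0 ≤ L)
    (hEs : ∀ t, 0 < t → ∀ s, HasDerivAt (fun x => E x t) (E1 s t) s)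
    (hEss : ∀ t, 0 < t → ∀ s, HasDerivAt (fun x => E1 x t) (d₂ s t) s)
    (hEt : ∀ s t, 0 < t → HasDerivAt (E s) (τ s t) t)
    (hEc : ContinuousOn (fun p : ℝ × ℝ => E p.1 p.2) (univ ×ˢ Icc 0 T))
    (hQlow : ∀ x q y t, x ≤ q → q ≤ y → t ∈ Icc (0:ℝ) T → - (2 * B * (y - x)) ≤
      (y - x) * E q t - (y - q) * E x t - (q - x) * E y t)
    (hQ0 : ∀ x q y, x ≤ q → q ≤ y →
      0 ≤ (y - x) * E q 0 - (y - q) * E x 0 - (q - x) * E y 0)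
    (comb : ∀ s, ∀ t ∈ Ioc 0 T, ∀ k, 0 < k → ∀ {ε : ℝ}, k * d₂ s t ≤ 2 * ε → 0 < ε →
      k * τ s t ≤ L * (2 * ε))
    (comb' : ∀ s, ∀ t ∈ Ioc 0 T, ∀ k, 0 < k → ∀ {ε : ℝ}, -(2 * ε) ≤ k * d₂ s t → 0 < ε →
      -(L * (2 * ε)) ≤ k * τ s t) (s : ℝ) : d₂ s T ≤ 0 := by
  set Q : ℝ → ℝ → ℝ → ℝ → ℝ := fun x q y t =>
    (y - x) * E q t - (y - q) * E x t - (q - x) * E y t with hQ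
  have key : ∀ ε, 0 < ε → ∀ x q y t, x ≤ q → q ≤ y → t ∈ Icc (0:ℝ) T →
      0 ≤ Q x q y t + ε * (x ^ 2 + q ^ 2 + y ^ 2) + ε * (6 * L + 1) * t := by
    intro ε hε x₀ q₀ y₀ t₀ hxq₀ hqy₀ ht₀
    by_contra hneg
    push Not at hneg
    set J : ℝ → ℝ → ℝ → ℝ → ℝ := fun x q y t =>
      Q x q y t + ε * (x ^ 2 + q ^ 2 + y ^ 2) + ε * (6 * L + 1) * t with hJ
    set R := 4 * B / ε + 1 + |x₀| + |q₀| + |y₀| with hR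
    have hBε : 0 ≤ 4 * B / ε := by positivity
    set S : Set (ℝ × ℝ × ℝ × ℝ) :=
      (Icc (-R) R ×ˢ Icc (-R) R ×ˢ Icc (-R) R ×ˢ Icc 0 T) ∩ {P | P.1 ≤ P.2.1 ∧ P.2.1 ≤ P.2.2.1} with hS
    have hScomp : IsCompact S := by
      apply IsCompact.inter_right
      · exact isCompact_Icc.prod (isCompact_Icc.prod (isCompact_Icc.prod isCompact_Icc))
      · exact (isClosed_le continuous_fst (continuous_fst.comp continuous_snd)).inter
          (isClosed_le (continuous_fst.comp continuous_snd)
            (continuous_fst.comp (continuous_snd.comp continuous_snd)))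
    have hmem : (x₀, q₀, y₀, t₀) ∈ S := by
      have a1 := abs_nonneg x₀
      have a2 := abs_nonneg q₀
      have a3 := abs_nonneg y₀
      have b1 := neg_abs_le x₀
      have b2 := neg_abs_le q₀
      have b3 := neg_abs_le y₀
      have c1 := le_abs_self x₀
      have c2 := le_abs_self q₀
      have c3 := le_abs_self y₀
      refine ⟨⟨⟨?_, ?_⟩, ⟨?_, ?_⟩, ⟨?_, ?_⟩, ht₀⟩, hxq₀, hqy₀⟩ <;> simp only <;> linarith
    have hJc : ContinuousOn (fun P : ℝ × ℝ × ℝ × ℝ => J P.1 P.2.1 P.2.2.1 P.2.2.2) S := by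
      have e1 : ContinuousOn (fun P : ℝ × ℝ × ℝ × ℝ => E P.1 P.2.2.2) S :=
        hEc.comp (f := fun P : ℝ × ℝ × ℝ × ℝ => (P.1, P.2.2.2)) (by fun_prop)
          (fun P hP => ⟨mem_univ _, hP.1.2.2.2⟩)
      have e2 : ContinuousOn (fun P : ℝ × ℝ × ℝ × ℝ => E P.2.1 P.2.2.2) S :=
        hEc.comp (f := fun P : ℝ × ℝ × ℝ × ℝ => (P.2.1, P.2.2.2)) (by fun_prop)
          (fun P hP => ⟨mem_univ _, hP.1.2.2.2⟩)
      have e3 : ContinuousOn (fun P : ℝ × ℝ × ℝ × ℝ => E P.2.2.1 P.2.2.2) S :=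
        hEc.comp (f := fun P : ℝ × ℝ × ℝ × ℝ => (P.2.2.1, P.2.2.2)) (by fun_prop)
          (fun P hP => ⟨mem_univ _, hP.1.2.2.2⟩)
      refine (((((ContinuousOn.mul ?_ e2).sub (ContinuousOn.mul ?_ e1)).sub
        (ContinuousOn.mul ?_ e3)).add ?_).add ?_) <;> fun_prop
    obtain ⟨⟨x, q, y, t⟩, hPS, hmin⟩ := hScomp.exists_isMinOn ⟨_, hmem⟩ hJc
    have hxq : x ≤ q := hPS.2.1
    have hqy : q ≤ y := hPS.2.2
    have ht : t ∈ Icc (0:ℝ) T := hPS.1.2.2.2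
    have hJneg : J x q y t < 0 := lt_of_le_of_lt (hmin hmem) hneg
    -- size bound
    have hLt : 0 ≤ ε * (6 * L + 1) * t := mul_nonneg (by positivity) ht.1
    have hsum : ε * (x ^ 2 + q ^ 2 + y ^ 2) ≤ 2 * B * (y - x) := by
      have := hQlow x q y t hxq hqy ht
      simp only [hJ] at hJneg
      linarith
    have hbd : ∀ a, a ^ 2 ≤ x ^ 2 + q ^ 2 + y ^ 2 → |a| ≤ 4 * B / ε :=
      fun a ha => size_bound hε hB0 hsum ha
    have hxR : |x| + 1 ≤ R := by
      have := hbd x (by nlinarith [sq_nonneg q, sq_nonneg y])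
      linarith [abs_nonneg x₀, abs_nonneg q₀, abs_nonneg y₀]
    have hqR : |q| + 1 ≤ R := by
      have := hbd q (by nlinarith [sq_nonneg x, sq_nonneg y])
      linarith [abs_nonneg x₀, abs_nonneg q₀, abs_nonneg y₀]
    have hyR : |y| + 1 ≤ R := by
      have := hbd y (by nlinarith [sq_nonneg q, sq_nonneg x])
      linarith [abs_nonneg x₀, abs_nonneg q₀, abs_nonneg y₀]
    have hsq : 0 ≤ ε * (x ^ 2 + q ^ 2 + y ^ 2) := by positivity
    have hQneg : Q x q y t < 0 := by simp only [hJ] at hJneg; linarith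
    have htpos : 0 < t := by
      rcases eq_or_lt_of_le ht.1 with h0 | h0
      · exfalso; rw [← h0] at hQneg; linarith [hQ0 x q y hxq hqy]
      · exact h0
    have hxq' : x < q := by
      rcases eq_or_lt_of_le hxq with h0 | h0
      · exfalso; rw [h0] at hQneg; simp only [hQ] at hQneg; linarith
      · exact h0
    have hqy' : q < y := by
      rcases eq_or_lt_of_le hqy with h0 | h0
      · exfalso; rw [h0] at hQneg; simp only [hQ] at hQneg; linarith
      · exact h0
    have hminJ : ∀ x' q' y' t', |x'| ≤ R → |q'| ≤ R → |y'| ≤ R → t' ∈ Icc (0:ℝ) T → x' ≤ q' → q' ≤ y' →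
        J x q y t ≤ J x' q' y' t' := by
      intro x' q' y' t' a b c d e f
      exact hmin (show (x', q', y', t') ∈ S from
        ⟨⟨abs_le.1 a, abs_le.1 b, abs_le.1 c, d⟩, e, f⟩)
    have near : ∀ a b : ℝ, |b - a| < 1 → |a| + 1 ≤ R → |b| ≤ R := by
      intro a b h1 h2
      have := abs_sub_abs_le_abs_sub b a
      linarith
    -- x variation
    have vx : 0 ≤ -((y - q) * (d₂ x t)) + 2 * ε := by
      refine sd_min (f := fun x => J x q y t)
        (f' := fun x => -E q t - (-0 + (y - q) * (E1 x t)) + E y t + 2 * ε * x)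
        (a := x) (δ := min 1 (q - x)) (lt_min one_pos (by linarith)) ?_ ?_ ?_
      · intro x' hx'
        have h1 := lt_of_lt_of_le hx' (min_le_left _ _)
        have h2 := lt_of_lt_of_le hx' (min_le_right _ _)
        exact hminJ x' q y t (near x x' h1 hxR) (by linarith) (by linarith) ht
          (by linarith [le_abs_self (x' - x)]) hqy
      · intro x'
        have i := hasDerivAt_id x'
        have k1 := ((i.const_sub y).mul_const (E q t))
        have k2 := (hEs t htpos x').const_mul (y - q)
        have k3 := (i.const_sub q).mul_const (E y t)
        have k4 := (((i.pow 2).add_const (q ^ 2)).add_const (y ^ 2)).const_mul ε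
        have k := (((k1.sub k2).sub k3).add k4).add_const (ε * (6 * L + 1) * t)
        refine (k.congr_deriv ?_)
        simp; ring
      · have i := hasDerivAt_id x
        have k2 := (hEss t htpos x).const_mul (y - q)
        have k := ((((hasDerivAt_const x (-E q t)).sub ((hasDerivAt_const x (-0:ℝ)).add k2)).add_const (E y t))).add (i.const_mul (2 * ε))
        refine (k.congr_deriv ?_)
        simp
    have vy : 0 ≤ -((q - x) * (d₂ y t)) + 2 * ε := by
      refine sd_min (f := fun y => J x q y t)
        (f' := fun y => E q t - E x t - ((q - x) * (E1 y t)) + 2 * ε * y)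
        (a := y) (δ := min 1 (y - q)) (lt_min one_pos (by linarith)) ?_ ?_ ?_
      · intro y' hy'
        have h1 := lt_of_lt_of_le hy' (min_le_left _ _)
        have h2 := lt_of_lt_of_le hy' (min_le_right _ _)
        exact hminJ x q y' t (by linarith) (by linarith) (near y y' h1 hyR) ht hxq
          (by linarith [neg_abs_le (y' - y)])
      · intro y'
        have i := hasDerivAt_id y'
        have k1 := ((i.sub_const x).mul_const (E q t))
        have k2 := (i.sub_const q).mul_const (E x t)
        have k3 := (hEs t htpos y').const_mul (q - x)
        have k4 := ((i.pow 2).const_add (x ^ 2 + q ^ 2)).const_mul ε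
        have k := (((k1.sub k2).sub k3).add k4).add_const (ε * (6 * L + 1) * t)
        refine (k.congr_deriv ?_)
        simp; ring
      · have i := hasDerivAt_id y
        have k2 := (hEss t htpos y).const_mul (q - x)
        have k := (((hasDerivAt_const y (E q t - E x t)).sub k2)).add (i.const_mul (2 * ε))
        refine (k.congr_deriv ?_)
        simp
    have vq : 0 ≤ ((y - x) * (d₂ q t)) + 2 * ε := by
      refine sd_min (f := fun q => J x q y t)
        (f' := fun q => ((y - x) * (E1 q t)) + E x t - E y t + 2 * ε * q)
        (a := q) (δ := min 1 (min (q - x) (y - q)))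
        (lt_min one_pos (lt_min (by linarith) (by linarith))) ?_ ?_ ?_
      · intro q' hq'
        have h1 := lt_of_lt_of_le hq' (min_le_left _ _)
        have h2 := lt_of_lt_of_le hq' ((min_le_right _ _).trans (min_le_left _ _))
        have h3 := lt_of_lt_of_le hq' ((min_le_right _ _).trans (min_le_right _ _))
        exact hminJ x q' y t (by linarith) (near q q' h1 hqR) (by linarith) ht
          (by linarith [neg_abs_le (q' - q)]) (by linarith [le_abs_self (q' - q)])
      · intro q'
        have i := hasDerivAt_id q'
        have k1 := (hEs t htpos q').const_mul (y - x)
        have k2 := (i.const_sub y).mul_const (E x t)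
        have k3 := (i.sub_const x).mul_const (E y t)
        have k4 := (((i.pow 2).const_add (x ^ 2)).add_const (y ^ 2)).const_mul ε
        have k := (((k1.sub k2).sub k3).add k4).add_const (ε * (6 * L + 1) * t)
        refine (k.congr_deriv ?_)
        simp; ring
      · have i := hasDerivAt_id q
        have k2 := (hEss t htpos q).const_mul (y - x)
        have k := ((k2.add_const (E x t)).sub_const (E y t)).add (i.const_mul (2 * ε))
        refine (k.congr_deriv ?_)
        simp
    have vt : ((y - x) * (τ q t) - (y - q) * (τ x t)
        - (q - x) * (τ y t)) + ε * (6 * L + 1) ≤ 0 := by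
      refine td_min (f := fun t => J x q y t) htpos ?_ ?_
      · intro t' h1 h2
        exact hminJ x q y t' (by linarith) (by linarith) (by linarith) ⟨h1, h2.trans ht.2⟩ hxq hqy
      · have k := (((((hEt q t htpos).const_mul (y - x)).sub ((hEt x t htpos).const_mul (y - q))).sub
          ((hEt y t htpos).const_mul (q - x))).add_const (ε * (x ^ 2 + q ^ 2 + y ^ 2))).add
          ((hasDerivAt_id t).const_mul (ε * (6 * L + 1)))
        refine (k.congr_deriv ?_)
        simp
    -- combine
    have c1 := comb x t ⟨htpos, ht.2⟩ (y - q) (by linarith) (ε := ε) (by linarith) hε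
    have c2 := comb y t ⟨htpos, ht.2⟩ (q - x) (by linarith) (ε := ε) (by linarith) hε
    have c3 := comb' q t ⟨htpos, ht.2⟩ (y - x) (by linarith) (ε := ε) (by linarith) hε
    nlinarith
  have hQnn : ∀ x q y, x ≤ q → q ≤ y → 0 ≤ Q x q y T := by
    intro x q y hxq hqy
    have hlim : Tendsto (fun ε : ℝ => Q x q y T + ε * (x ^ 2 + q ^ 2 + y ^ 2) + ε * (6 * L + 1) * T)
        (𝓝[>] 0) (𝓝 (Q x q y T)) := by
      have : Continuous (fun ε : ℝ => Q x q y T + ε * (x ^ 2 + q ^ 2 + y ^ 2) + ε * (6 * L + 1) * T) := by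
        fun_prop
      have h2 := this.tendsto 0
      simp only [zero_mul, add_zero] at h2
      exact h2.mono_left nhdsWithin_le_nhds
    refine ge_of_tendsto hlim ?_
    filter_upwards [self_mem_nhdsWithin] with ε hε
    exact key ε hε x q y T hxq hqy ⟨hT.le, le_rfl⟩
  -- conclusion
  have fin : 0 ≤ -(2 * d₂ s T) := by
    refine sd_min (f := fun d => 2 * E s T - E (s + d) T - E (s - d) T)
      (f' := fun d => - (E1 (s + d) T) + (E1 (s - d) T))
      (a := 0) (δ := 1) one_pos ?_ ?_ ?_
    · intro d _
      simp only [add_zero, sub_zero]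
      have : 0 ≤ 2 * E s T - E (s + |d|) T - E (s - |d|) T := by
        rcases eq_or_lt_of_le (abs_nonneg d) with h0 | h0
        · rw [← h0]; simp; linarith
        · have := hQnn (s - |d|) s (s + |d|) (by linarith) (by linarith)
          simp only [hQ] at this
          have e : (s + |d| - (s - |d|)) * E s T - (s + |d| - s) * E (s - |d|) T - (s - (s - |d|)) * E (s + |d|) T = |d| * (2 * E s T - E (s + |d|) T - E (s - |d|) T) := by ring
          rw [e] at this
          exact nonneg_of_mul_nonneg_right this h0
      rcases abs_choice d with hd | hd
      · rw [hd] at this; linarith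
      · rw [hd] at this
        rw [sub_neg_eq_add, ← sub_eq_add_neg] at this
        linarith
    · intro d
      have i := hasDerivAt_id d
      have k1 := HasDerivAt.comp d (hEs T hT (s + d)) (i.const_add s)
      have k2 := HasDerivAt.comp d (hEs T hT (s - d)) (i.const_sub s)
      have k := (k1.const_sub (2 * E s T)).sub k2
      refine k.congr_deriv ?_
      ring
    · have i := hasDerivAt_id (0:ℝ)
      have k1 := HasDerivAt.comp (0:ℝ) (hEss T hT (s + 0)) (i.const_add s)
      have k2 := HasDerivAt.comp (0:ℝ) (hEss T hT (s - 0)) (i.const_sub s)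
      have k := k1.neg.add k2
      refine k.congr_deriv ?_
      simp; ring
  linarith

theorem PSol.comparison {m : ℝ} (hm : 1 < m) {w w' : ℝ → ℝ → ℝ} {w₀ w₀' : ℝ → ℝ}
    {z z1 z' z1' : ℝ → ℝ → ℝ} (h : PSol m w w₀ z z1) (h' : PSol m w' w₀' z' z1')
    (hle : ∀ s, w₀ s ≤ w₀' s) {T : ℝ} (hT : 0 < T) (s : ℝ) : w s T ≤ w' s T := by
  obtain ⟨C₁, hC₁0, hC₁⟩ := h.bdd T hT
  obtain ⟨C₂, hC₂0, hC₂⟩ := h'.bdd T hT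
  set C := max C₁ C₂ with hCdef
  have hC0 : 0 ≤ C := le_max_of_le_left hC₁0
  have hC : ∀ s, ∀ t ∈ Ioc (0:ℝ) T, w s t ≤ C := fun s t ht => (hC₁ s t ht).trans (le_max_left _ _)
  have hC' : ∀ s, ∀ t ∈ Ioc (0:ℝ) T, w' s t ≤ C := fun s t ht => (hC₂ s t ht).trans (le_max_right _ _)
  obtain ⟨L, hL0, hL⟩ := rpow_lip hm hC0
  obtain ⟨p, p1, hp, hp1, -⟩ := exists_double_prim (h.c0.sub h'.c0) 0
  have hp1neg : ∀ s, (w₀ - w₀') s ≤ 0 := fun s => sub_nonpos.2 (hle s)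
  set E : ℝ → ℝ → ℝ := fun s t => z s t - z' s t + p s with hE
  -- bound on the difference
  set B := C ^ m * T with hB
  have hB0 : 0 ≤ B := mul_nonneg (Real.rpow_nonneg hC0 m) hT.le
  have hD : ∀ s, ∀ t ∈ Icc (0:ℝ) T, |z s t - z' s t| ≤ B := by
    intro s t ht
    have a1 := h.lip hm hC s le_rfl ht.1 ht.2
    have a2 := h'.lip hm hC' s le_rfl ht.1 ht.2
    rw [h.zero] at a1
    rw [h'.zero] at a2
    have : C ^ m * (t - 0) ≤ B := by
      rw [hB]; apply mul_le_mul_of_nonneg_left _ (Real.rpow_nonneg hC0 m); linarith [ht.2]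
    rw [abs_le]
    constructor <;> linarith
  have hEs : ∀ t, 0 < t → ∀ s, HasDerivAt (fun x => E x t) (z1 s t - z1' s t + p1 s) s :=
    fun t ht s => ((h.ds t ht s).sub (h'.ds t ht s)).add (hp s)
  have hEss : ∀ t, 0 < t → ∀ s,
      HasDerivAt (fun s => z1 s t - z1' s t + p1 s) (w s t - w' s t) s := by
    intro t ht s
    refine (((h.dss t ht s).sub (h'.dss t ht s)).add (hp1 s)).congr_deriv ?_
    simp only [Pi.sub_apply]; ring
  have hEt : ∀ s t, 0 < t → HasDerivAt (E s) (w s t ^ m - w' s t ^ m) t :=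
    fun s t ht => ((h.dt s t ht).sub (h'.dt s t ht)).add_const _
  have hEc : ContinuousOn (fun p : ℝ × ℝ => E p.1 p.2) (univ ×ˢ Icc 0 T) := by
    have c1 := h.contJoint hm hT
    have c2 := h'.contJoint hm hT
    have c3 : Continuous p := continuous_iff_continuousAt.2 fun s => (hp s).continuousAt
    exact (c1.sub c2).add (c3.comp continuous_fst).continuousOn
  have hQlow : ∀ x q y t, x ≤ q → q ≤ y → t ∈ Icc (0:ℝ) T → - (2 * B * (y - x)) ≤
      (y - x) * E q t - (y - q) * E x t - (q - x) * E y t := by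
    intro x q y t hxq hqy ht
    have h1 := three_point_concave hp hp1 hp1neg hxq hqy
    have d1 := abs_le.1 (hD x t ht)
    have d2 := abs_le.1 (hD q t ht)
    have d3 := abs_le.1 (hD y t ht)
    have e1 := mul_le_mul_of_nonneg_left d2.1 (by linarith : 0 ≤ y - x)
    have e2 := mul_le_mul_of_nonneg_left d1.2 (by linarith : 0 ≤ y - q)
    have e3 := mul_le_mul_of_nonneg_left d3.2 (by linarith : 0 ≤ q - x)
    simp only [hE]
    nlinarith
  have hQ0 : ∀ x q y, x ≤ q → q ≤ y → 0 ≤ (y - x) * E q 0 - (y - q) * E x 0 - (q - x) * E y 0 := by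
    intro x q y hxq hqy
    have h1 := three_point_concave hp hp1 hp1neg hxq hqy
    simp only [hE, h.zero, h'.zero]
    simpa using h1
  have comb : ∀ a b k : ℝ, 0 ≤ a → a ≤ C → 0 ≤ b → b ≤ C → 0 < k → ∀ ε : ℝ, 0 < ε →
      k * (a - b) ≤ 2 * ε → k * (a ^ m - b ^ m) ≤ L * (2 * ε) := by
    intro a b k ha haC hb hbC hk ε hε hab
    have h1 : a - b ≤ 2 * ε / k := by rw [le_div_iff₀ hk]; linarith
    have h2 := rpow_lip' hm hL0 hL ha haC hb hbC (by positivity) h1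
    have h3 := mul_le_mul_of_nonneg_left h2 hk.le
    have : k * (L * (2 * ε / k)) = L * (2 * ε) := by field_simp
    linarith
  have := three_point_max (d₂ := fun s t => w s t - w' s t) hT hB0 hL0 hEs hEss hEt hEc hQlow hQ0
    (fun s t ht k hk ε hd hε => comb _ _ k (h.nonneg _ _) (hC _ _ ht) (h'.nonneg _ _)
      (hC' _ _ ht) hk ε hε hd)
    (fun s t ht k hk ε hd hε => by
      have := comb _ _ k (h'.nonneg s t) (hC' _ _ ht) (h.nonneg s t)
        (hC _ _ ht) hk ε hε (by linarith)
      linarith) s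
  linarith

lemma PSol.stab {m : ℝ} (hm : 1 < m) {w w' : ℝ → ℝ → ℝ} {w₀ w₀' : ℝ → ℝ}
    {z z1 z' z1' : ℝ → ℝ → ℝ} (h : PSol m w w₀ z z1) (h' : PSol m w' w₀' z' z1')
    {M L : ℝ} (hMpos : 0 < M) (hM : ∀ s, ∀ t ∈ Ioc (0:ℝ) 1, w s t ≤ M)
    (hM' : ∀ s, ∀ t ∈ Ioc (0:ℝ) 1, w' s t ≤ M) (hL0 : 0 ≤ L)
    (hL : ∀ a b : ℝ, 0 ≤ a → a ≤ M → 0 ≤ b → b ≤ M → |a ^ m - b ^ m| ≤ L * |a - b|)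
    {p p1 : ℝ → ℝ} (hp : ∀ s, HasDerivAt p (p1 s) s)
    (hp1 : ∀ s, HasDerivAt p1 (w₀ s - w₀' s) s) {s₀ ρ η : ℝ} (hρ : 0 < ρ)
    (hpb : ∀ s, |s - s₀| ≤ ρ → |p s| ≤ η) {x : ℝ} (hx : |x - s₀| ≤ ρ) :
    z x 1 - z' x 1 + p x ≤ η + M ^ m / ρ ^ 2 * ((x - s₀) ^ 2 + (2 * L + 1)) := by
  set a := M ^ m / ρ ^ 2 with ha
  have hapos : 0 < a := by positivity
  have haρ : a * ρ ^ 2 = M ^ m := by rw [ha]; field_simp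
  set b := (2 * L + 1) * a with hb
  have hbpos : 0 < b := by positivity
  set E : ℝ → ℝ → ℝ := fun s t => z s t - z' s t + p s with hE
  have hD : ∀ s, ∀ t ∈ Icc (0:ℝ) 1, z s t - z' s t ≤ M ^ m := by
    intro s t ht
    have a1 := h.lip hm hM s le_rfl ht.1 ht.2
    have a2 := h'.lip hm hM' s le_rfl ht.1 ht.2
    rw [h.zero] at a1
    rw [h'.zero] at a2
    have : M ^ m * (t - 0) ≤ M ^ m * 1 := by
      apply mul_le_mul_of_nonneg_left _ (by positivity); linarith [ht.2]
    linarith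
  have hEs : ∀ t, 0 < t → ∀ s, HasDerivAt (fun x => E x t) (z1 s t - z1' s t + p1 s) s :=
    fun t ht s => ((h.ds t ht s).sub (h'.ds t ht s)).add (hp s)
  have hEss : ∀ t, 0 < t → ∀ s,
      HasDerivAt (fun s => z1 s t - z1' s t + p1 s) (w s t - w' s t) s := by
    intro t ht s
    refine (((h.dss t ht s).sub (h'.dss t ht s)).add (hp1 s)).congr_deriv ?_
    ring
  have hEt : ∀ s t, 0 < t → HasDerivAt (E s) (w s t ^ m - w' s t ^ m) t :=
    fun s t ht => ((h.dt s t ht).sub (h'.dt s t ht)).add_const _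
  have hEc : ContinuousOn (fun p : ℝ × ℝ => E p.1 p.2) (univ ×ˢ Icc 0 1) := by
    have c1 := h.contJoint hm one_pos
    have c2 := h'.contJoint hm one_pos
    have c3 : Continuous p := continuous_iff_continuousAt.2 fun s => (hp s).continuousAt
    exact (c1.sub c2).add (c3.comp continuous_fst).continuousOn
  set J : ℝ → ℝ → ℝ := fun s t => a * (s - s₀) ^ 2 + b * t - E s t with hJ
  suffices hkey : -η ≤ J x 1 by
    simp only [hJ, hE] at hkey
    rw [hb] at hkey
    linarith
  by_contra hneg
  push Not at hneg
  set S : Set (ℝ × ℝ) := Icc (s₀ - ρ) (s₀ + ρ) ×ˢ Icc 0 1 with hS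
  have hScomp : IsCompact S := isCompact_Icc.prod isCompact_Icc
  have hJc : ContinuousOn (fun P : ℝ × ℝ => J P.1 P.2) S := by
    refine ContinuousOn.sub (by fun_prop) (hEc.mono ?_)
    exact prod_mono (subset_univ _) le_rfl
  have hmem : (x, (1:ℝ)) ∈ S := by
    have := abs_le.1 hx
    exact ⟨⟨by linarith, by linarith⟩, zero_le_one, le_rfl⟩
  obtain ⟨⟨s, t⟩, hPS, hmin⟩ := hScomp.exists_isMinOn ⟨_, hmem⟩ hJc
  have hs : |s - s₀| ≤ ρ := abs_le.2 ⟨by linarith [hPS.1.1], by linarith [hPS.1.2]⟩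
  have ht : t ∈ Icc (0:ℝ) 1 := hPS.2
  have hJneg : J s t < -η := lt_of_le_of_lt (hmin hmem) hneg
  have hpbs := abs_le.1 (hpb s hs)
  have htpos : 0 < t := by
    rcases eq_or_lt_of_le ht.1 with h0 | h0
    · exfalso
      rw [← h0] at hJneg
      simp only [hJ, hE, h.zero, h'.zero] at hJneg
      have : 0 ≤ a * (s - s₀) ^ 2 := by positivity
      linarith
    · exact h0
  have hsρ : |s - s₀| < ρ := by
    rcases eq_or_lt_of_le hs with h0 | h0
    · exfalso
      have e : (s - s₀) ^ 2 = ρ ^ 2 := by rw [← sq_abs, h0]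
      simp only [hJ, hE] at hJneg
      rw [e, haρ] at hJneg
      have := hD s t ht
      have : 0 ≤ b * t := by positivity
      linarith
    · exact h0
  have v1 : 0 ≤ 2 * a - (w s t - w' s t) := by
    refine sd_min (f := fun s => J s t) (f' := fun s => 2 * a * (s - s₀) - (z1 s t - z1' s t + p1 s))
      (a := s) (δ := ρ - |s - s₀|) (by linarith) ?_ ?_ ?_
    · intro y hy
      have : |y - s₀| ≤ ρ := by
        have := abs_sub_le y s s₀
        linarith
      have := abs_le.1 this
      exact hmin (show (y, t) ∈ S from ⟨⟨by linarith, by linarith⟩, ht⟩)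
    · intro y
      have i := hasDerivAt_id y
      have k := ((((i.sub_const s₀).pow 2).const_mul a).add_const (b * t)).sub (hEs t htpos y)
      refine k.congr_deriv ?_
      simp; ring
    · have i := hasDerivAt_id s
      have k := ((i.sub_const s₀).const_mul (2 * a)).sub (hEss t htpos s)
      refine k.congr_deriv ?_
      simp
  have v2 : b - (w s t ^ m - w' s t ^ m) ≤ 0 := by
    refine td_min (f := fun t => J s t) htpos ?_ ?_
    · intro t' h1 h2
      exact hmin (show (s, t') ∈ S from ⟨hPS.1, h1, h2.trans ht.2⟩)
    · have k := (((hasDerivAt_id t).const_mul b).const_add (a * (s - s₀) ^ 2)).sub (hEt s t htpos)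
      refine k.congr_deriv ?_
      simp
  have v3 := rpow_lip' hm hL0 hL (h.nonneg s t) (hM s t ⟨htpos, ht.2⟩) (h'.nonneg s t)
    (hM' s t ⟨htpos, ht.2⟩) (k := 2 * a) (by positivity) (by linarith)
  rw [hb] at v2
  nlinarith

lemma one_sub_le_rpow_neg {α h : ℝ} (hα : 0 < α) (hh : 0 < h) : 1 - α * h ≤ ((1 + h) ^ α)⁻¹ := by
  rw [← Real.rpow_neg (by linarith), Real.rpow_def_of_pos (by linarith)]
  have h1 := Real.add_one_le_exp (Real.log (1 + h) * -α)
  have h2 := Real.log_le_sub_one_of_pos (by linarith : 0 < 1 + h)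
  nlinarith

lemma PSol.time_mono {m : ℝ} (hm : 1 < m) {w : ℝ → ℝ → ℝ} {w₀ : ℝ → ℝ}
    {z z1 : ℝ → ℝ → ℝ} (hs : PSol m w w₀ z z1) (hw₀ : ∀ s, 0 ≤ w₀ s) {h : ℝ} (hh : 0 < h) (s : ℝ) :
    (1 - 1 / (m - 1) * h) * w s 1 ≤ w s (1 + h) := by
  set c := (1 + h) ^ (1 / (m - 1)) with hc
  have hm1 : 0 < m - 1 := by linarith
  have hcpos : 0 < c := by positivity
  have hc1 : 1 ≤ c := Real.one_le_rpow (by linarith) (by positivity)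
  have hrel : c ^ m * (1:ℝ) ^ 2 = c * (1 + h) := by
    have : c ^ (m - 1) = 1 + h := by
      rw [hc, ← Real.rpow_mul (by linarith)]
      rw [one_div_mul_cancel hm1.ne', Real.rpow_one]
    rw [← this, one_pow, mul_one]
    nth_rewrite 2 [← Real.rpow_one c]
    rw [← Real.rpow_add hcpos]
    congr 1; ring
  have hsc := hs.scale hcpos (l := 1) (by linarith : 0 < 1 + h) hrel
  have := hs.comparison hm hsc (fun s => by rw [one_mul]; nlinarith [hw₀ s]) one_pos s
  simp only [one_mul, mul_one] at this
  have h1 : c⁻¹ * w s 1 ≤ w s (1 + h) := by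
    rw [inv_mul_le_iff₀ hcpos]; exact this
  have h2 := one_sub_le_rpow_neg (α := 1 / (m - 1)) (by positivity) hh
  have h3 := mul_le_mul_of_nonneg_right h2 (hs.nonneg s 1)
  exact h3.trans h1

lemma PSol.semiconv {m : ℝ} (hm : 1 < m) {w : ℝ → ℝ → ℝ} {w₀ : ℝ → ℝ}
    {z z1 : ℝ → ℝ → ℝ} (hs : PSol m w w₀ z z1) (hw₀ : ∀ s, 0 ≤ w₀ s) {M : ℝ}
    (hM : ∀ s, w s 1 ≤ M) (x₀ : ℝ) :
    ConvexOn ℝ univ (fun s => w s 1 ^ m + 1 / (m - 1) * M / 2 * (s - x₀) ^ 2) := by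
  have hm1 : 0 < m - 1 := by linarith
  set k := 1 / (m - 1) * M with hk
  have hQ : ∀ h, 0 < h → ConvexOn ℝ univ (fun s => h⁻¹ * (z s (1 + h) - z s 1) + k / 2 * (s - x₀) ^ 2) := by
    intro h hh
    have d1 : ∀ s, HasDerivAt (fun s => h⁻¹ * (z s (1 + h) - z s 1) + k / 2 * (s - x₀) ^ 2)
        (h⁻¹ * (z1 s (1 + h) - z1 s 1) + k * (s - x₀)) s := by
      intro s
      have := (((hs.ds (1 + h) (by linarith) s).sub (hs.ds 1 one_pos s)).const_mul h⁻¹).add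
        ((((hasDerivAt_id s).sub_const x₀).pow 2).const_mul (k / 2))
      refine this.congr_deriv ?_
      simp; ring
    have d2 : ∀ s, HasDerivAt (fun s => h⁻¹ * (z1 s (1 + h) - z1 s 1) + k * (s - x₀))
        (h⁻¹ * (w s (1 + h) - w s 1) + k) s := by
      intro s
      have := (((hs.dss (1 + h) (by linarith) s).sub (hs.dss 1 one_pos s)).const_mul h⁻¹).add
        (((hasDerivAt_id s).sub_const x₀).const_mul k)
      refine this.congr_deriv ?_
      ring
    have e := funext fun s => (d1 s).deriv
    apply convexOn_univ_of_deriv2_nonneg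
    · exact fun s => (d1 s).differentiableAt
    · rw [e]; exact fun s => (d2 s).differentiableAt
    · intro s
      simp only [Function.iterate_succ, Function.iterate_zero, Function.comp, id]
      rw [e, (d2 s).deriv]
      have h1 := hs.time_mono hm hw₀ hh s
      have h2 : -(k * h) ≤ w s (1 + h) - w s 1 := by
        have : 1 / (m - 1) * h * w s 1 ≤ 1 / (m - 1) * h * M :=
          mul_le_mul_of_nonneg_left (hM s) (by positivity)
        rw [hk]; linarith
      have h3 := mul_le_mul_of_nonneg_left h2 (inv_pos.2 hh).le
      have : h⁻¹ * -(k * h) = -k := by field_simp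
      linarith
  have hlim : ∀ s, Tendsto (fun h : ℝ => h⁻¹ * (z s (1 + h) - z s 1) + k / 2 * (s - x₀) ^ 2) (𝓝[>] 0)
      (𝓝 (w s 1 ^ m + k / 2 * (s - x₀) ^ 2)) := by
    intro s
    have := (hs.dt s 1 one_pos).tendsto_slope_zero_right
    simp only [smul_eq_mul] at this
    exact this.add_const _
  refine ⟨convex_univ, fun x _ y _ a b ha hb hab => ?_⟩
  refine le_of_tendsto_of_tendsto (hlim _) (((hlim x).const_smul a).add ((hlim y).const_smul b)) ?_
  filter_upwards [self_mem_nhdsWithin] with h hh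
  exact (hQ h hh).2 (mem_univ x) (mem_univ y) ha hb hab

lemma PSol.slip {m : ℝ} (hm : 1 < m) {w : ℝ → ℝ → ℝ} {w₀ : ℝ → ℝ}
    {z z1 : ℝ → ℝ → ℝ} (hs : PSol m w w₀ z z1) (hw₀ : ∀ s, 0 ≤ w₀ s) {M : ℝ} (hM0 : 0 ≤ M)
    (hM : ∀ s, w s 1 ≤ M) {x y : ℝ} (hxy : |y - x| ≤ 1) :
    |w y 1 ^ m - w x 1 ^ m| ≤ (M ^ m + 1 / (m - 1) * M) * |y - x| := by
  have hm1 : 0 < m - 1 := by linarith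
  have hk0 : 0 ≤ 1 / (m - 1) * M := by positivity
  have hconv := hs.semiconv hm hw₀ hM x
  set k := 1 / (m - 1) * M with hk
  have hg0 : ∀ s, 0 ≤ w s 1 ^ m := fun s => Real.rpow_nonneg (hs.nonneg s 1) m
  have hgM : ∀ s, w s 1 ^ m ≤ M ^ m := fun s => Real.rpow_le_rpow (hs.nonneg s 1) (hM s) (by linarith)
  have hMm : 0 ≤ M ^ m := Real.rpow_nonneg hM0 m
  -- for unit vector σ
  have main : ∀ σ d : ℝ, σ ^ 2 = 1 → 0 ≤ d → d ≤ 1 →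
      |w (x + σ * d) 1 ^ m - w x 1 ^ m| ≤ (M ^ m + k) * d := by
    intro σ d hσ hd0 hd1
    have c1 := hconv.2 (mem_univ x) (mem_univ (x + σ)) (sub_nonneg.2 hd1) hd0 (by ring)
    have c2 := hconv.2 (mem_univ (x - σ)) (mem_univ (x + σ * d)) 
      (show (0:ℝ) ≤ d / (1 + d) by positivity) (show (0:ℝ) ≤ 1 / (1 + d) by positivity) (by field_simp; ring)
    simp only [smul_eq_mul] at c1 c2
    have e1 : (1 - d) * x + d * (x + σ) = x + σ * d := by ring
    have e2 : d / (1 + d) * (x - σ) + 1 / (1 + d) * (x + σ * d) = x := by field_simp; ring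
    rw [e1] at c1
    rw [e2] at c2
    have f1 : (x + σ * d - x) ^ 2 = d ^ 2 := by
      have : (x + σ * d - x) ^ 2 = σ ^ 2 * d ^ 2 := by ring
      rw [this, hσ, one_mul]
    have f2 : (x + σ - x) ^ 2 = 1 := by rw [← hσ]; ring
    have f3 : (x - σ - x) ^ 2 = 1 := by rw [← hσ]; ring
    rw [f1, f2, sub_self] at c1
    rw [f1, f3, sub_self] at c2
    have c2' := mul_le_mul_of_nonneg_left c2 (by linarith : 0 ≤ 1 + d)
    have e3 : (1 + d) * (d / (1 + d) * (w (x - σ) 1 ^ m + k / 2 * 1) + 1 / (1 + d) * (w (x + σ * d) 1 ^ m + k / 2 * d ^ 2))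
      = d * (w (x - σ) 1 ^ m + k / 2) + (w (x + σ * d) 1 ^ m + k / 2 * d ^ 2) := by field_simp
    rw [e3] at c2'
    have hdd : k / 2 * d ^ 2 ≤ k / 2 * d := by
      apply mul_le_mul_of_nonneg_left _ (by positivity); nlinarith
    have hdd0 : 0 ≤ k / 2 * d ^ 2 := by positivity
    have g1 := mul_le_mul_of_nonneg_left (hgM (x + σ)) hd0
    have g2 := mul_le_mul_of_nonneg_left (hgM (x - σ)) hd0
    have g3 := mul_nonneg hd0 (hg0 x)
    have g4 := mul_nonneg hk0 hd0
    rw [abs_le]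
    constructor <;> nlinarith
  rcases le_total x y with h | h
  · have := main 1 (y - x) (by norm_num) (by linarith) (by linarith [le_abs_self (y - x)])
    rw [one_mul, add_sub_cancel] at this
    rwa [abs_of_nonneg (sub_nonneg.2 h)]
  · have := main (-1) (x - y) (by norm_num) (by linarith) (by linarith [neg_abs_le (y - x)])
    rw [show x + -1 * (x - y) = y by ring] at this
    rwa [abs_of_nonpos (sub_nonpos.2 h), neg_sub]

/-- A function with second derivative bounded below has large second difference. -/
lemma second_diff {E E1 d : ℝ → ℝ} (hE : ∀ s, HasDerivAt E (E1 s) s) (hE1 : ∀ s, HasDerivAt E1 (d s) s)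
    {x δ κ : ℝ} (hδ : 0 < δ) (hd : ∀ s, |s - x| ≤ δ → κ ≤ d s) :
    κ * δ ^ 2 ≤ E (x + δ) + E (x - δ) - 2 * E x := by
  set G : ℝ → ℝ := fun s => E s - κ / 2 * (s - x) ^ 2 with hG
  have d1 : ∀ s, HasDerivAt G (E1 s - κ * (s - x)) s := by
    intro s
    have := (hE s).sub ((((hasDerivAt_id s).sub_const x).pow 2).const_mul (κ / 2))
    refine this.congr_deriv ?_
    simp; ring
  have d2 : ∀ s, HasDerivAt (fun s => E1 s - κ * (s - x)) (d s - κ) s := by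
    intro s
    have := (hE1 s).sub (((hasDerivAt_id s).sub_const x).const_mul κ)
    refine this.congr_deriv ?_
    simp
  have e := funext fun s => (d1 s).deriv
  have hconv : ConvexOn ℝ (Icc (x - δ) (x + δ)) G := by
    apply convexOn_of_deriv2_nonneg (convex_Icc _ _)
    · exact fun s _ => (d1 s).continuousAt.continuousWithinAt
    · exact fun s _ => (d1 s).differentiableAt.differentiableWithinAt
    · rw [e]; exact fun s _ => (d2 s).differentiableAt.differentiableWithinAt
    · intro s hs
      rw [interior_Icc] at hs
      simp only [Function.iterate_succ, Function.iterate_zero, Function.comp, id]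
      rw [e, (d2 s).deriv]
      have := hd s (abs_le.2 ⟨by linarith [hs.1], by linarith [hs.2]⟩)
      linarith
  have := hconv.2 (show x - δ ∈ Icc (x - δ) (x + δ) from ⟨le_rfl, by linarith⟩)
    (show x + δ ∈ Icc (x - δ) (x + δ) from ⟨by linarith, le_rfl⟩)
    (show (0:ℝ) ≤ 1 / 2 by norm_num) (show (0:ℝ) ≤ 1 / 2 by norm_num) (by norm_num)
  simp only [smul_eq_mul, hG] at this
  rw [show 1 / 2 * (x - δ) + 1 / 2 * (x + δ) = x by ring] at this
  nlinarith

/-- Pointwise stability at time one. -/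
lemma pointwise_stab {m : ℝ} (hm : 1 < m) {M σ : ℝ} (hM : 0 < M) (hσ : 0 < σ) :
    ∃ ρ η : ℝ, 0 < ρ ∧ 0 < η ∧ ∀ (w w' : ℝ → ℝ → ℝ) (w₀ w₀' : ℝ → ℝ) (z z1 z' z1' : ℝ → ℝ → ℝ),
      PSol m w w₀ z z1 → PSol m w' w₀' z' z1' → (∀ s, 0 ≤ w₀ s) → (∀ s, 0 ≤ w₀' s) →
      (∀ s, ∀ t ∈ Ioc (0:ℝ) 1, w s t ≤ M) → (∀ s, ∀ t ∈ Ioc (0:ℝ) 1, w' s t ≤ M) →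
      ∀ s₀, (∫ y in (s₀ - ρ)..(s₀ + ρ), |w₀ y - w₀' y|) ≤ η → w s₀ 1 - w' s₀ 1 ≤ σ := by
  have hm1 : 0 < m - 1 := by linarith
  obtain ⟨L, hL0, hL⟩ := rpow_lip hm hM.le
  set A := M ^ m + 1 / (m - 1) * M with hA
  have hApos : 0 < A := by positivity
  -- choose δ
  set δ := min 1 ((σ / 4) ^ m / A) with hδ
  have hδpos : 0 < δ := lt_min one_pos (by positivity)
  have hδ1 : δ ≤ 1 := min_le_left _ _
  have hδA : A * δ ≤ (σ / 4) ^ m := by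
    have := min_le_right 1 ((σ / 4) ^ m / A)
    rw [← hδ, le_div_iff₀ hApos] at this
    linarith
  -- choose ρ so that 4 * a * (2 L + 2) small
  set θ := σ / 2 * δ ^ 2 / 4 with hθ
  have hθpos : 0 < θ := by positivity
  obtain ⟨ρ, hρ1, hρ⟩ : ∃ ρ : ℝ, 1 ≤ ρ ∧ M ^ m / ρ ^ 2 * (2 * L + 2) < θ / 2 := by
    have : Tendsto (fun ρ : ℝ => M ^ m / ρ ^ 2 * (2 * L + 2)) atTop (𝓝 (0 * (2 * L + 2))) :=
      (tendsto_const_nhds.div_atTop (tendsto_pow_atTop (by norm_num))).mul_const _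
    rw [zero_mul] at this
    have h2 := this.eventually_lt_const (half_pos hθpos)
    obtain ⟨ρ, h3, h4⟩ := (h2.and (eventually_ge_atTop 1)).exists
    exact ⟨ρ, h4, h3⟩
  have hρpos : 0 < ρ := by linarith
  refine ⟨ρ, θ / 2 / ρ / 2, hρpos, by positivity, ?_⟩
  intro w w' w₀ w₀' z z1 z' z1' h h' hw₀ hw₀' hwM hwM' s₀ hsmall
  by_contra hcon
  push Not at hcon
  obtain ⟨p, p1, hp, hp1, hpb⟩ := exists_double_prim (h.c0.sub h'.c0) s₀
  have hpb' : ∀ s, |s - s₀| ≤ ρ → |p s| ≤ θ / 2 / 2 := by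
    intro s hs
    refine (hpb ρ hρpos s hs).trans ?_
    simp only [Pi.sub_apply]
    calc ρ * ∫ y in (s₀ - ρ)..(s₀ + ρ), |w₀ y - w₀' y| ≤ ρ * (θ / 2 / ρ / 2) := by gcongr
      _ = θ / 2 / 2 := by field_simp
  have up : ∀ s, |s - s₀| ≤ 1 → |z s 1 - z' s 1 + p s| < θ := by
    intro s hs
    have hs2 : (s - s₀) ^ 2 ≤ 1 := by rw [← sq_abs]; exact pow_le_one₀ (abs_nonneg _) hs
    have a1 := h.stab hm h' hM hwM hwM' hL0 hL hp hp1 hρpos hpb' (hs.trans hρ1)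
    have a2 := h'.stab hm h hM hwM' hwM hL0 hL (p := fun s => - p s) (p1 := fun s => - p1 s)
      (fun s => (hp s).neg) (fun s => (hp1 s).neg.congr_deriv (by simp)) hρpos
      (fun s hs => by rw [abs_neg]; exact hpb' s hs) (hs.trans hρ1)
    have a3 : M ^ m / ρ ^ 2 * ((s - s₀) ^ 2 + (2 * L + 1)) ≤ M ^ m / ρ ^ 2 * (2 * L + 2) := by
      apply mul_le_mul_of_nonneg_left _ (by positivity); linarith
    rw [abs_lt]
    constructor <;> linarith
  have osc : ∀ (u : ℝ → ℝ → ℝ), (∀ s, 0 ≤ u s 1) → (∀ s, |s - s₀| ≤ 1 →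
      |u s 1 ^ m - u s₀ 1 ^ m| ≤ A * |s - s₀|) → ∀ s, |s - s₀| ≤ δ → |u s 1 - u s₀ 1| ≤ σ / 4 := by
    intro u hu hlip s hs
    have h1 := abs_sub_rpow_le hm (hu s) (hu s₀)
    have h2 := hlip s (hs.trans hδ1)
    have h3 : A * |s - s₀| ≤ A * δ := by gcongr
    have h4 : |u s 1 - u s₀ 1| ^ m ≤ (σ / 4) ^ m := by linarith
    exact (Real.rpow_le_rpow_iff (abs_nonneg _) (by positivity) (by linarith)).1 h4
  have o1 := osc w (fun s => h.nonneg s 1) (fun s hs =>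
    h.slip hm hw₀ hM.le (fun s => hwM s 1 ⟨one_pos, le_rfl⟩) hs)
  have o2 := osc w' (fun s => h'.nonneg s 1) (fun s hs =>
    h'.slip hm hw₀' hM.le (fun s => hwM' s 1 ⟨one_pos, le_rfl⟩) hs)
  have sd := second_diff (E := fun s => z s 1 - z' s 1 + p s)
    (E1 := fun s => z1 s 1 - z1' s 1 + p1 s) (d := fun s => w s 1 - w' s 1) (x := s₀) (δ := δ)
    (κ := σ / 2)
    (fun s => ((h.ds 1 one_pos s).sub (h'.ds 1 one_pos s)).add (hp s))
    (fun s => by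
      refine (((h.dss 1 one_pos s).sub (h'.dss 1 one_pos s)).add (hp1 s)).congr_deriv ?_
      simp only [Pi.sub_apply]; ring) hδpos
    (fun s hs => by
      have b1 := abs_le.1 (o1 s hs)
      have b2 := abs_le.1 (o2 s hs)
      linarith)
  have u1 := abs_lt.1 (up (s₀ + δ) (by rw [add_sub_cancel_left, abs_of_pos hδpos]; exact hδ1))
  have u2 := abs_lt.1 (up (s₀ - δ) (by
    rw [show s₀ - δ - s₀ = -δ by ring, abs_neg, abs_of_pos hδpos]; exact hδ1))
  have u3 := abs_lt.1 (up s₀ (by simp))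
  have : σ / 2 * δ ^ 2 = 4 * θ := by rw [hθ]; ring
  linarith [u1.2, u2.2, u3.1]

open scoped Convolution in
lemma affine_of_weak {h : ℝ → ℝ} (hc : Continuous h)
    (H : ∀ (q q1 q2 : ℝ → ℝ) (R : ℝ), 0 < R → (∀ s, 0 ≤ q s) →
      (∀ s, HasDerivAt q (q1 s) s) → (∀ s, HasDerivAt q1 (q2 s) s) → Continuous q2 →
      (∀ s, R ≤ |s| → q s = 0 ∧ q1 s = 0 ∧ q2 s = 0) → ∫ s in (-R)..R, h s * q2 s = 0) (s : ℝ) :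
    h s = (1 - s) * h 0 + s * h 1 := by
  have hpos : ∀ n : ℕ, (0:ℝ) < 1 / ((n:ℝ) + 1) := fun n => by positivity
  set φ : ℕ → ContDiffBump (0:ℝ) := fun n =>
    { rIn := 1 / ((n:ℝ) + 1) / 2
      rOut := 1 / ((n:ℝ) + 1)
      rIn_pos := by have := hpos n; linarith
      rIn_lt_rOut := by have := hpos n; linarith } with hφ
  have hrout : Tendsto (fun n => (φ n).rOut) atTop (𝓝 0) := tendsto_one_div_add_atTop_nhds_zero_nat
  have hlim := fun x => ContDiffBump.convolution_tendsto_right_of_continuous (μ := volume) hrout hc x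
  have haff : ∀ n, ∀ x, (((φ n).normed volume) ⋆[ContinuousLinearMap.lsmul ℝ ℝ, volume] h) x
      = (1 - x) * (((φ n).normed volume) ⋆[ContinuousLinearMap.lsmul ℝ ℝ, volume] h) 0
      + x * (((φ n).normed volume) ⋆[ContinuousLinearMap.lsmul ℝ ℝ, volume] h) 1 := by
    intro n
    set ρ := (φ n).normed volume with hρ
    have hsm : ContDiff ℝ 2 ρ := (φ n).contDiff_normed (n := 2)
    have hcs : HasCompactSupport ρ := (φ n).hasCompactSupport_normed
    have hsm1 : ContDiff ℝ 1 (deriv ρ) := by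
      have : ContDiff ℝ (1 + 1) ρ := hsm
      exact (contDiff_succ_iff_deriv.1 this).2.2
    have hsm2 : Continuous (deriv (deriv ρ)) := hsm1.continuous_deriv le_rfl
    have hz : ∀ x, 2 ≤ |x| → ρ x = 0 ∧ deriv ρ x = 0 ∧ deriv (deriv ρ) x = 0 := by
      intro x hx
      have hn : x ∉ tsupport ρ := by
        rw [hρ, (φ n).tsupport_normed_eq]
        simp only [Metric.mem_closedBall, dist_zero_right, Real.norm_eq_abs, not_le]
        have : (φ n).rOut ≤ 1 := by
          show 1 / ((n:ℝ) + 1) ≤ 1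
          rw [div_le_one (by positivity)]
          linarith [(Nat.cast_nonneg n : (0:ℝ) ≤ n)]
        linarith
      have hn1 : x ∉ tsupport (deriv ρ) := fun hh => hn (tsupport_deriv_subset hh)
      have hn2 : x ∉ tsupport (deriv (deriv ρ)) := fun hh => hn1 (tsupport_deriv_subset hh)
      exact ⟨image_eq_zero_of_notMem_tsupport hn, image_eq_zero_of_notMem_tsupport hn1,
        image_eq_zero_of_notMem_tsupport hn2⟩
    have hli : LocallyIntegrable h volume := hc.locallyIntegrable
    set G := ρ ⋆[ContinuousLinearMap.lsmul ℝ ℝ, volume] h with hG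
    have hd1 := fun x => hcs.hasDerivAt_convolution_left (ContinuousLinearMap.lsmul ℝ ℝ)
      (hsm.of_le (by norm_num)) hli x
    have hd2 := fun x => hcs.deriv.hasDerivAt_convolution_left (ContinuousLinearMap.lsmul ℝ ℝ)
      hsm1 hli x
    have hzero : ∀ x, (deriv (deriv ρ) ⋆[ContinuousLinearMap.lsmul ℝ ℝ, volume] h) x = 0 := by
      intro x
      have hsupp : ∀ s, |x| + 2 ≤ |s| → 2 ≤ |x - s| := by
        intro s hs
        have := abs_sub_abs_le_abs_sub s x
        rw [abs_sub_comm] at this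
        linarith
      have hdρ : ∀ s, HasDerivAt ρ (deriv ρ s) s := fun s =>
        (hsm.differentiable (by norm_num) s).hasDerivAt
      have hdρ1 : ∀ s, HasDerivAt (deriv ρ) (deriv (deriv ρ) s) s := fun s =>
        (hsm1.differentiable (by norm_num) s).hasDerivAt
      have hsub : ∀ s, HasDerivAt (fun s => x - s) (-1) s := fun s => by
        simpa using (hasDerivAt_id s).const_sub x
      have key := H (fun s => ρ (x - s)) (fun s => -deriv ρ (x - s))
        (fun s => deriv (deriv ρ) (x - s)) (|x| + 2) (by positivity)
        (fun s => (φ n).nonneg_normed _)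
        (fun s => ((hdρ (x - s)).comp s (hsub s)).congr_deriv (by ring))
        (fun s => (((hdρ1 (x - s)).comp s (hsub s)).neg).congr_deriv (by ring))
        (hsm2.comp (by fun_prop))
        (fun s hs => by
          have := hz (x - s) (hsupp s hs)
          simp [this])
      rw [convolution_eq_swap]
      rw [← key, intervalIntegral.integral_eq_integral_of_support_subset]
      · congr 1; ext s; simp [mul_comm]
      · intro s hs
        by_contra hcon
        apply hs
        have : |x| + 2 ≤ |s| := by
          by_contra hlt
          push Not at hlt
          exact hcon ⟨(abs_lt.1 hlt).1, (abs_lt.1 hlt).2.le⟩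
        simp [hz (x - s) (hsupp s this)]
    have hc1 : ∀ x y, (deriv ρ ⋆[ContinuousLinearMap.lsmul ℝ ℝ, volume] h) x
        = (deriv ρ ⋆[ContinuousLinearMap.lsmul ℝ ℝ, volume] h) y :=
      is_const_of_deriv_eq_zero (fun x => (hd2 x).differentiableAt)
        (fun x => by rw [(hd2 x).deriv, hzero x])
    set a := (deriv ρ ⋆[ContinuousLinearMap.lsmul ℝ ℝ, volume] h) 0 with ha
    have hc2 : ∀ x y, G x - a * x = G y - a * y :=
      is_const_of_deriv_eq_zero (f := fun x => G x - a * x)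
        (fun x => ((hd1 x).sub ((hasDerivAt_id x).const_mul a)).differentiableAt)
        (fun x => by
          have : HasDerivAt (fun x => G x - a * x) (_ - a * 1) x :=
            (hd1 x).sub ((hasDerivAt_id x).const_mul a)
          rw [this.deriv, hc1 x 0]
          ring)
    intro x
    have e1 := hc2 x 0
    have e2 := hc2 1 0
    have : a = G 1 - G 0 := by linarith
    rw [this] at e1
    linarith
  refine tendsto_nhds_unique (hlim s) ?_
  simp_rw [fun n => haff n s]
  exact ((hlim 0).const_mul _).add ((hlim 1).const_mul _)

lemma log_lift {R : ℝ} {q q1 q2 : ℝ → ℝ} 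
    (h1 : ∀ s, HasDerivAt q (q1 s) s) (h2 : ∀ s, HasDerivAt q1 (q2 s) s) (hc : Continuous q2)
    (hz : ∀ s, R ≤ |s| → q s = 0 ∧ q1 s = 0 ∧ q2 s = 0) :
    (∀ r, HasDerivAt (fun r => if r = 0 then 0 else q (log r)) (q1 (log r) / r) r) ∧
    (∀ r, HasDerivAt (fun r => q1 (log r) / r) ((q2 (log r) - q1 (log r)) / r ^ 2) r) ∧
    Continuous (fun r => (q2 (log r) - q1 (log r)) / r ^ 2) := by
  have hev : ∀ᶠ r in 𝓝 (0:ℝ), r ≠ 0 → q (log r) = 0 ∧ q1 (log r) = 0 ∧ q2 (log r) = 0 := by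
    have : ∀ᶠ r in 𝓝[≠] (0:ℝ), log r < - R := Real.tendsto_log_nhdsNE_zero.eventually_lt_atBot _
    filter_upwards [eventually_nhdsWithin_iff.1 this] with r hr h0
    apply hz
    have := hr h0
    have h3 := neg_abs_le (log r)
    linarith
  refine ⟨fun r => ?_, fun r => ?_, ?_⟩
  · by_cases hr : r = 0
    · subst hr
      have : (fun r => if r = 0 then 0 else q (log r)) =ᶠ[𝓝 0] fun _ => (0:ℝ) := by
        filter_upwards [hev] with r h
        by_cases h0 : r = 0
        · simp [h0]
        · simp [h0, (h h0).1]
      simpa using (hasDerivAt_const (0:ℝ) (0:ℝ)).congr_of_eventuallyEq this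
    · have := (h1 (log r)).comp r (Real.hasDerivAt_log hr)
      refine (this.congr_of_eventuallyEq ?_).congr_deriv (by rw [div_eq_mul_inv])
      filter_upwards [eventually_ne_nhds hr] with x hx
      simp [hx]
  · by_cases hr : r = 0
    · subst hr
      have : (fun r => q1 (log r) / r) =ᶠ[𝓝 0] fun _ => (0:ℝ) := by
        filter_upwards [hev] with r h
        by_cases h0 : r = 0
        · simp [h0]
        · simp [(h h0).2.1]
      simpa using (hasDerivAt_const (0:ℝ) (0:ℝ)).congr_of_eventuallyEq this
    · have := ((h2 (log r)).comp r (Real.hasDerivAt_log hr)).div (hasDerivAt_id r) hr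
      refine this.congr_deriv ?_
      simp only [Function.comp, id]
      field_simp
  · rw [continuous_iff_continuousAt]
    intro r
    have hq1 : Continuous q1 := continuous_iff_continuousAt.2 fun s => (h2 s).continuousAt
    by_cases hr : r = 0
    · subst hr
      have : (fun r => (q2 (log r) - q1 (log r)) / r ^ 2) =ᶠ[𝓝 0] fun _ => (0:ℝ) := by
        filter_upwards [hev] with r h
        by_cases h0 : r = 0
        · simp [h0]
        · simp [(h h0).2.1, (h h0).2.2]
      exact (continuousAt_const (y := (0:ℝ))).congr this.symm
    · have hl := Real.continuousAt_log hr
      exact ((hc.continuousAt.comp hl).sub (hq1.continuousAt.comp hl)).div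
        (continuousAt_id.pow 2) (pow_ne_zero 2 hr)

lemma exp_subst {g : ℝ → ℝ} (hg : ContinuousOn g (Ioi 0)) (a b : ℝ) :
    ∫ r in (exp a)..(exp b), g r = ∫ s in a..b, g (exp s) * exp s := by
  rw [← intervalIntegral.integral_comp_mul_deriv' (f := exp) (f' := exp) (g := g)]
  · rfl
  · exact fun x _ => Real.hasDerivAt_exp x
  · exact Real.continuous_exp.continuousOn
  · refine hg.mono ?_
    rintro _ ⟨x, _, rfl⟩
    exact Real.exp_pos x

section
variable {m : ℝ} {v : ℝ → ℝ → ℝ} {v₀ : ℝ → ℝ}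

lemma w_cont (hm : 1 < m) (hv : IsRadialVeryWeakSolution 2 m v v₀) :
    ContinuousOn (fun p : ℝ × ℝ => v (exp p.1) p.2 ^ m) (univ ×ˢ Ioi 0) := by
  have h1 : ContinuousOn (fun p : ℝ × ℝ => v (exp p.1) p.2) (univ ×ˢ Ioi 0) := by
    refine hv.2.1.comp (f := fun p : ℝ × ℝ => (exp p.1, p.2)) (by fun_prop) ?_
    rintro ⟨s, t⟩ ⟨-, ht⟩
    exact ⟨(Real.exp_pos s).le, ht⟩
  exact h1.rpow_const (fun _ _ => Or.inr (by linarith))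

lemma w_cont_t (hm : 1 < m) (hv : IsRadialVeryWeakSolution 2 m v v₀) (s : ℝ) :
    ContinuousOn (fun t => v (exp s) t ^ m) (Ioi 0) :=
  (w_cont hm hv).comp (f := fun t : ℝ => (s, t)) (by fun_prop) (fun t ht => ⟨mem_univ _, ht⟩)

lemma w_cont_s (hv : IsRadialVeryWeakSolution 2 m v v₀) {t : ℝ} (ht : 0 < t) :
    Continuous (fun s => v (exp s) t) := by
  rw [← continuousOn_univ]
  refine hv.2.1.comp (f := fun s : ℝ => (exp s, t)) (by fun_prop) ?_
  intro s _
  exact ⟨(Real.exp_pos s).le, ht⟩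

lemma w_bdd (hm : 1 < m) (hv : IsRadialVeryWeakSolution 2 m v v₀) {T : ℝ} (hT : 0 < T) :
    ∃ C, 0 ≤ C ∧ (∀ s, ∀ t ∈ Icc (0:ℝ) T, v (exp s) t ≤ C) ∧
      (∀ s, ∀ t ∈ Icc (0:ℝ) T, ‖v (exp s) t ^ m‖ ≤ C ^ m) := by
  obtain ⟨C, hC⟩ := hv.2.2.1 T hT
  have h0 : 0 ≤ C := (hv.1 1 0).trans (hC 1 (by simp) 0 ⟨le_rfl, hT.le⟩)
  refine ⟨C, h0, fun s t ht => hC _ (Real.exp_pos s).le t ht, fun s t ht => ?_⟩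
  rw [Real.norm_of_nonneg (Real.rpow_nonneg (hv.1 _ _) m)]
  exact Real.rpow_le_rpow (hv.1 _ _) (hC _ (Real.exp_pos s).le t ht) (by linarith)

lemma w_meas (hm : 1 < m) (hv : IsRadialVeryWeakSolution 2 m v v₀) (s : ℝ) (T : ℝ) :
    AEStronglyMeasurable (fun t => v (exp s) t ^ m) (volume.restrict (Ioc 0 T)) :=
  ((w_cont_t hm hv s).mono Ioc_subset_Ioi_self).aestronglyMeasurable measurableSet_Ioc

lemma w_int (hm : 1 < m) (hv : IsRadialVeryWeakSolution 2 m v v₀) (s : ℝ) {T : ℝ} (hT : 0 < T) :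
    IntervalIntegrable (fun t => v (exp s) t ^ m) volume 0 T := by
  obtain ⟨C, -, -, hC⟩ := w_bdd hm hv hT
  rw [intervalIntegrable_iff_integrableOn_Ioc_of_le hT.le]
  refine IntegrableOn.of_bound (C := C ^ m) (by simp) (w_meas hm hv s T) ?_
  filter_upwards [ae_restrict_mem measurableSet_Ioc] with t ht
  exact hC s t ⟨ht.1.le, ht.2⟩

lemma z_cont (hm : 1 < m) (hv : IsRadialVeryWeakSolution 2 m v v₀) {T : ℝ} (hT : 0 < T) :
    Continuous (fun s => ∫ t in (0:ℝ)..T, v (exp s) t ^ m) := by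
  obtain ⟨C, -, -, hC⟩ := w_bdd hm hv hT
  apply intervalIntegral.continuous_of_dominated_interval (bound := fun _ => C ^ m)
  · intro s; rw [uIoc_of_le hT.le]; exact w_meas hm hv s T
  · intro s
    filter_upwards with t ht
    rw [uIoc_of_le hT.le] at ht
    exact hC s t ⟨ht.1.le, ht.2⟩
  · exact intervalIntegrable_const
  · filter_upwards with t ht
    rw [uIoc_of_le hT.le] at ht
    exact (w_cont_s hv ht.1).rpow_const (fun _ => Or.inr (by linarith))

lemma weak_id (hm : 1 < m) (hv : IsRadialVeryWeakSolution 2 m v v₀) (hv₀ : Continuous v₀)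
    {T : ℝ} (hT : 0 < T)
    (q q1 q2 : ℝ → ℝ) (R : ℝ) (hR : 0 < R) (hq : ∀ s, 0 ≤ q s)
    (h1 : ∀ s, HasDerivAt q (q1 s) s) (h2 : ∀ s, HasDerivAt q1 (q2 s) s) (hc : Continuous q2)
    (hz : ∀ s, R ≤ |s| → q s = 0 ∧ q1 s = 0 ∧ q2 s = 0) :
    ∫ s in (-R)..R, (∫ t in (0:ℝ)..T, v (exp s) t ^ m) * q2 s
      = ∫ s in (-R)..R, (v (exp s) T - v₀ (exp s)) * q s := by
  obtain ⟨d1, d2, c2⟩ := log_lift h1 h2 hc hz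
  have c1 := continuous_iff_continuousAt.2 fun s => (d2 s).continuousAt
  have c0 := continuous_iff_continuousAt.2 fun s => (d1 s).continuousAt
  have hqc := continuous_iff_continuousAt.2 fun s => (h1 s).continuousAt
  have hzR := hz R (le_abs_self R)
  have hzR' := hz (-R) (by rw [abs_neg]; exact le_abs_self R)
  have key := hv.2.2.2 (exp (-R)) (exp R) T
    (fun r _ => if r = 0 then 0 else q (log r)) (fun _ _ => 0)
    (fun r _ => q1 (log r) / r) (fun r _ => (q2 (log r) - q1 (log r)) / r ^ 2)
    (Real.exp_pos _) (Real.exp_lt_exp.2 (by linarith)) hT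
    (fun r t => by
      by_cases h : r = 0
      · simp [h]
      · simp [h, hq])
    (fun r t => hasDerivAt_const t _) (fun r t => d1 r) (fun r t => d2 r)
    (c0.comp continuous_fst) continuous_const (c1.comp continuous_fst) (c2.comp continuous_fst)
    (fun t _ => by simp [hzR.1, hzR'.1])
  have e0 : ((2:ℕ):ℝ) - 1 = 1 := by norm_num
  rw [e0] at key
  simp only [Real.rpow_one, Real.log_exp, hzR.2.1, hzR'.2.1, zero_div, mul_zero, sub_zero,
    intervalIntegral.integral_zero, add_zero, zero_add] at key
  -- right hand side
  have hR2 : (∫ r in (exp (-R))..(exp R), r ^ (-2:ℝ) * (v r T * (if r = 0 then 0 else q (log r))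
      - v₀ r * (if r = 0 then 0 else q (log r))) * r)
      = ∫ s in (-R)..R, (v (exp s) T - v₀ (exp s)) * q s := by
    rw [exp_subst]
    · apply intervalIntegral.integral_congr
      intro s _
      have he := Real.exp_pos s
      simp only [he.ne', if_false, Real.log_exp]
      rw [Real.rpow_neg he.le, Real.rpow_two]
      field_simp
    · have hvT : ContinuousOn (fun r => v r T) (Ioi 0) :=
        hv.2.1.comp (f := fun r : ℝ => (r, T)) (by fun_prop)
          (fun r hr => ⟨mem_Ici.2 (le_of_lt hr), hT⟩)
      refine ((ContinuousOn.rpow_const continuousOn_id (fun r hr => Or.inl (ne_of_gt hr))).mul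
        ((hvT.mul c0.continuousOn).sub (hv₀.continuousOn.mul c0.continuousOn))).mul continuousOn_id
  rw [hR2] at key
  rw [← key]
  have hL : ∫ t in (0:ℝ)..T, ∫ r in (exp (-R))..(exp R),
      ((q2 (log r) - q1 (log r)) / r ^ 2 + 1 / r * (q1 (log r) / r)) * v r t ^ m * r
      = ∫ t in (0:ℝ)..T, ∫ s in (-R)..R, v (exp s) t ^ m * q2 s := by
    rw [intervalIntegral.integral_of_le hT.le, intervalIntegral.integral_of_le hT.le]
    refine setIntegral_congr_fun measurableSet_Ioc ?_
    intro t ht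
    simp only
    rw [exp_subst]
    · apply intervalIntegral.integral_congr
      intro s _
      have he := Real.exp_pos s
      simp only [Real.log_exp]
      field_simp
      ring
    · have hvt : ContinuousOn (fun r => v r t ^ m) (Ioi 0) :=
        ContinuousOn.rpow_const (hv.2.1.comp (f := fun r : ℝ => (r, t)) (by fun_prop)
          (fun r hr => ⟨mem_Ici.2 (le_of_lt hr), ht.1⟩)) (fun _ _ => Or.inr (by linarith))
      refine ((c2.continuousOn.add ((continuousOn_const.div continuousOn_id
        (fun r hr => ne_of_gt hr)).mul c1.continuousOn)).mul hvt).mul continuousOn_id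
  rw [hL, MeasureTheory.intervalIntegral_intervalIntegral_swap]
  · apply intervalIntegral.integral_congr
    intro s _
    simp only
    rw [intervalIntegral.integral_mul_const]
  · rw [uIoc_of_le hT.le, uIoc_of_le (by linarith : -R ≤ R)]
    obtain ⟨C, hC0, -, hC⟩ := w_bdd hm hv hT
    obtain ⟨B, hB⟩ := (isCompact_Icc (a := -R) (b := R)).exists_bound_of_continuousOn hc.continuousOn
    have hms : MeasurableSet (Ioc (0:ℝ) T ×ˢ Ioc (-R) R) := measurableSet_Ioc.prod measurableSet_Ioc
    refine IntegrableOn.of_bound (C := C ^ m * B) ?_ ?_ ?_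
    · rw [Measure.volume_eq_prod, Measure.prod_prod]
      exact ENNReal.mul_lt_top (by simp) (by simp)
    · refine ContinuousOn.aestronglyMeasurable ?_ hms
      refine ContinuousOn.mul (f := fun p : ℝ × ℝ => v (exp p.2) p.1 ^ m) ?_
        (hc.comp continuous_snd).continuousOn
      exact (w_cont hm hv).comp (f := fun p : ℝ × ℝ => (p.2, p.1)) (by fun_prop)
        (fun p hp => ⟨mem_univ _, hp.1.1⟩)
    · filter_upwards [ae_restrict_mem hms] with p hp
      simp only [Function.uncurry]
      rw [norm_mul]
      exact mul_le_mul (hC _ _ ⟨hp.1.1.le, hp.1.2⟩) (hB _ ⟨hp.2.1.le, hp.2.2⟩) (norm_nonneg _)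
        (Real.rpow_nonneg hC0 m)

lemma z_second (hm : 1 < m) (hv : IsRadialVeryWeakSolution 2 m v v₀) (hv₀ : Continuous v₀)
    {T : ℝ} (hT : 0 < T) : ∃ z1 : ℝ → ℝ,
    (∀ s, HasDerivAt (fun s => ∫ t in (0:ℝ)..T, v (exp s) t ^ m) (z1 s) s) ∧
    (∀ s, HasDerivAt z1 (v (exp s) T - v₀ (exp s)) s) := by
  set g : ℝ → ℝ := fun s => v (exp s) T - v₀ (exp s) with hg
  have hgc : Continuous g := (w_cont_s hv hT).sub (hv₀.comp Real.continuous_exp)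
  obtain ⟨p, p1, hp, hp1, -⟩ := exists_double_prim hgc 0
  have hpc := continuous_iff_continuousAt.2 fun s => (hp s).continuousAt
  have hp1c := continuous_iff_continuousAt.2 fun s => (hp1 s).continuousAt
  set z : ℝ → ℝ := fun s => ∫ t in (0:ℝ)..T, v (exp s) t ^ m with hzdef
  have hzc : Continuous z := z_cont hm hv hT
  have haff := affine_of_weak (h := fun s => z s - p s) (hzc.sub hpc) (by
    intro q q1 q2 R hR hq h1 h2 hc hz
    have e := weak_id hm hv hv₀ hT q q1 q2 R hR hq h1 h2 hc hz
    have hzR := hz R (le_abs_self R)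
    have hzR' := hz (-R) (by rw [abs_neg]; exact le_abs_self R)
    have hqc := continuous_iff_continuousAt.2 fun s => (h1 s).continuousAt
    have hq1c := continuous_iff_continuousAt.2 fun s => (h2 s).continuousAt
    have i1 := intervalIntegral.integral_mul_deriv_eq_deriv_mul (a := -R) (b := R)
      (fun x _ => hp x) (fun x _ => h2 x) (hp1c.intervalIntegrable _ _) (hc.intervalIntegrable _ _)
    have i2 := intervalIntegral.integral_mul_deriv_eq_deriv_mul (a := -R) (b := R)
      (fun x _ => hp1 x) (fun x _ => h1 x) (hgc.intervalIntegrable _ _) (hq1c.intervalIntegrable _ _)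
    rw [hzR.2.1, hzR'.2.1] at i1
    rw [hzR.1, hzR'.1] at i2
    have i3 : ∫ s in (-R)..R, (z s - p s) * q2 s
        = (∫ s in (-R)..R, z s * q2 s) - ∫ s in (-R)..R, p s * q2 s := by
      have j1 : IntervalIntegrable (fun s => z s * q2 s) volume (-R) R :=
        (hzc.mul hc).intervalIntegrable _ _
      have j2 : IntervalIntegrable (fun s => p s * q2 s) volume (-R) R :=
        (hpc.mul hc).intervalIntegrable _ _
      rw [← intervalIntegral.integral_sub j1 j2]
      apply intervalIntegral.integral_congr
      intro s _
      simp only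
      ring
    rw [i3, e, i1, i2]
    simp only [hg]
    ring)
  set a := z 0 - p 0
  set b := z 1 - p 1
  refine ⟨fun s => p1 s + (b - a), fun s => ?_, fun s => (hp1 s).add_const _⟩
  have e : z = fun s => p s + (a + (b - a) * s) := by
    ext s
    have := haff s
    linear_combination this
  rw [e]
  refine ((hp s).add (((hasDerivAt_id s).const_mul (b - a)).const_add a)).congr_deriv (by ring)

lemma toPSol (hm : 1 < m) (hv : IsRadialVeryWeakSolution 2 m v v₀) (hv₀ : Continuous v₀) :
    ∃ z z1, PSol m (fun s t => v (exp s) t) (fun s => v₀ (exp s)) z z1 := by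
  have hex : ∀ T : ℝ, ∃ z1 : ℝ → ℝ, 0 < T →
      (∀ s, HasDerivAt (fun s => ∫ t in (0:ℝ)..T, v (exp s) t ^ m) (z1 s) s) ∧
      (∀ s, HasDerivAt z1 (v (exp s) T - v₀ (exp s)) s) := by
    intro T
    by_cases hT : 0 < T
    · obtain ⟨z1, h⟩ := z_second hm hv hv₀ hT
      exact ⟨z1, fun _ => h⟩
    · exact ⟨0, fun h => absurd h hT⟩
  choose z1 hz1 using hex
  refine ⟨fun s T => ∫ t in (0:ℝ)..T, v (exp s) t ^ m, fun s T => z1 T s, ?_⟩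
  refine ⟨fun s t => hv.1 _ _, ?_, fun s => by simp, ?_, ?_, fun t ht => (hz1 t ht).1,
    fun t ht => (hz1 t ht).2, hv₀.comp Real.continuous_exp⟩
  · intro T hT
    obtain ⟨C, h0, h, -⟩ := w_bdd hm hv hT
    exact ⟨C, h0, fun s t ht => h s t ⟨ht.1.le, ht.2⟩⟩
  · intro s
    have hi := w_int hm hv s one_pos
    have h := intervalIntegral.continuousOn_primitive_interval
      (μ := volume) (a := 0) (b := 1) (f := fun t => v (exp s) t ^ m) (by
        rw [uIcc_of_le zero_le_one, integrableOn_Icc_iff_integrableOn_Ioc]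
        exact (intervalIntegrable_iff_integrableOn_Ioc_of_le zero_le_one).1 hi)
    have h0 := h 0 (by simp)
    rw [uIcc_of_le zero_le_one] at h0
    exact h0.mono_of_mem_nhdsWithin (Icc_mem_nhdsGE one_pos)
  · intro s t ht
    exact intervalIntegral.integral_hasDerivAt_right (w_int hm hv s ht)
      ((w_cont_t hm hv s).stronglyMeasurableAtFilter isOpen_Ioi t ht)
      ((w_cont_t hm hv s).continuousAt (Ioi_mem_nhds ht))

end

lemma PSol.rescale {m : ℝ} {w : ℝ → ℝ → ℝ} {w₀ : ℝ → ℝ} {z z1 : ℝ → ℝ → ℝ}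
    (h : PSol m w w₀ z z1) {l : ℝ} (hl : 0 < l) :
    ∃ z z1, PSol m (fun s t => w (l * s) (l ^ 2 * t)) (fun s => w₀ (l * s)) z z1 := by
  have := h.scale (c := 1) (l := l) (μ := l ^ 2) one_pos (by positivity) (by simp)
  simp only [one_mul] at this
  exact ⟨_, _, this⟩

lemma PSol.le_of_le {m : ℝ} (hm : 1 < m) {w : ℝ → ℝ → ℝ} {w₀ : ℝ → ℝ} {z z1 : ℝ → ℝ → ℝ}
    (h : PSol m w w₀ z z1) {M : ℝ} (hM : 0 ≤ M) (hw₀ : ∀ s, w₀ s ≤ M) (s : ℝ) {t : ℝ}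
    (ht : 0 < t) : w s t ≤ M :=
  PSol.comparison hm h (PSol.const hM) hw₀ ht s

lemma stab_abs {m : ℝ} (hm : 1 < m) {M σ : ℝ} (hM : 0 < M) (hσ : 0 < σ) :
    ∃ ρ η : ℝ, 0 < ρ ∧ 0 < η ∧ ∀ (w w' : ℝ → ℝ → ℝ) (w₀ w₀' : ℝ → ℝ) (z z1 z' z1' : ℝ → ℝ → ℝ),
      PSol m w w₀ z z1 → PSol m w' w₀' z' z1' → (∀ s, 0 ≤ w₀ s) → (∀ s, 0 ≤ w₀' s) →
      (∀ s, w₀ s ≤ M) → (∀ s, w₀' s ≤ M) →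
      ∀ s₀, (∫ y in (s₀ - ρ)..(s₀ + ρ), |w₀ y - w₀' y|) ≤ η → |w s₀ 1 - w' s₀ 1| ≤ σ := by
  obtain ⟨ρ, η, hρ, hη, H⟩ := pointwise_stab hm hM hσ
  refine ⟨ρ, η, hρ, hη, fun w w' w₀ w₀' z z1 z' z1' h h' p p' b b' s₀ hi => ?_⟩
  have B : ∀ s, ∀ t ∈ Ioc (0:ℝ) 1, w s t ≤ M := fun s t ht => h.le_of_le hm hM.le b s ht.1
  have B' : ∀ s, ∀ t ∈ Ioc (0:ℝ) 1, w' s t ≤ M := fun s t ht => h'.le_of_le hm hM.le b' s ht.1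
  rw [abs_sub_le_iff]
  refine ⟨H _ _ _ _ _ _ _ _ h h' p p' B B' s₀ hi, H _ _ _ _ _ _ _ _ h' h p' p B' B s₀ ?_⟩
  simpa only [abs_sub_comm] using hi

lemma asymp {m K M : ℝ} (hm : 1 < m) (hK : 0 ≤ K) (hM : 0 < M)
    {w : ℝ → ℝ → ℝ} {w₀ : ℝ → ℝ} {z z1 : ℝ → ℝ → ℝ}
    (h : PSol m w w₀ z z1) (hwc : ∀ t, 0 < t → Continuous (fun s => w s t))
    (h0 : ∀ s, 0 ≤ w₀ s) (hb : ∀ s, w₀ s ≤ M)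
    (hbot : Tendsto w₀ atBot (𝓝 K)) (htop : Tendsto w₀ atTop (𝓝 0)) :
    ∃ f : ℝ → ℝ, Continuous f ∧ (∀ ξ, 0 ≤ f ξ) ∧ Tendsto f atBot (𝓝 K) ∧ Tendsto f atTop (𝓝 0) ∧
      (∀ σ, 0 < σ → ∃ Λ, 0 < Λ ∧ ∀ l, Λ ≤ l → ∀ ξ, |w (l * ξ) (l ^ 2) - f ξ| ≤ σ) ∧
      (∀ t, 0 < t → Tendsto (fun s => w s t) atBot (𝓝 K)) := by
  have hKM : K ≤ M := le_of_tendsto hbot (Eventually.of_forall hb)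
  -- comparison with constants
  have close : ∀ σ, 0 < σ → ∃ ρ ε : ℝ, 0 < ρ ∧ 0 < ε ∧ ∀ l, 0 < l → ∀ ξ k, 0 ≤ k → k ≤ M →
      (∀ y ∈ Icc (ξ - ρ) (ξ + ρ), |w₀ (l * y) - k| ≤ ε) → |w (l * ξ) (l ^ 2) - k| ≤ σ := by
    intro σ hσ
    obtain ⟨ρ, η, hρ, hη, H⟩ := stab_abs hm hM hσ
    refine ⟨ρ, η / (2 * ρ), hρ, by positivity, fun l hl ξ k hk hkM hy => ?_⟩
    obtain ⟨y1, y2, hr⟩ := h.rescale hl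
    have := H _ _ _ _ _ _ _ _ hr (PSol.const hk) (fun s => h0 _) (fun _ => hk) (fun s => hb _)
      (fun _ => hkM) ξ ?_
    · simpa using this
    · have hcc : Continuous fun y => |w₀ (l * y) - k| :=
        ((h.c0.comp (continuous_const.mul continuous_id)).sub continuous_const).abs
      have : (∫ y in (ξ - ρ)..(ξ + ρ), |w₀ (l * y) - k|)
          ≤ ∫ y in (ξ - ρ)..(ξ + ρ), η / (2 * ρ) :=
        intervalIntegral.integral_mono_on (by linarith) (hcc.intervalIntegrable _ _)
          intervalIntegrable_const hy
      refine this.trans (le_of_eq ?_)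
      rw [intervalIntegral.integral_const, smul_eq_mul]
      field_simp
      ring
  have limbot : ∀ l, 0 < l → Tendsto (fun ξ => w (l * ξ) (l ^ 2)) atBot (𝓝 K) := by
    intro l hl
    rw [Metric.tendsto_nhds]
    intro σ hσ
    obtain ⟨ρ, ε, hρ, hε, H⟩ := close (σ / 2) (by linarith)
    obtain ⟨S, hS⟩ := eventually_atBot.1 ((Metric.tendsto_nhds.1 hbot) ε hε)
    filter_upwards [eventually_le_atBot (S / l - ρ)] with ξ hξ
    rw [Real.dist_eq]
    refine lt_of_le_of_lt (H l hl ξ K hK hKM fun y hy => ?_) (half_lt_self hσ)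
    have hy' : y ≤ S / l := by linarith [hy.2]
    rw [le_div_iff₀ hl] at hy'
    exact (hS (l * y) (by linarith)).le
  have limtop : ∀ l, 0 < l → Tendsto (fun ξ => w (l * ξ) (l ^ 2)) atTop (𝓝 0) := by
    intro l hl
    rw [Metric.tendsto_nhds]
    intro σ hσ
    obtain ⟨ρ, ε, hρ, hε, H⟩ := close (σ / 2) (by linarith)
    obtain ⟨S, hS⟩ := eventually_atTop.1 ((Metric.tendsto_nhds.1 htop) ε hε)
    filter_upwards [eventually_ge_atTop (S / l + ρ)] with ξ hξ
    rw [Real.dist_eq]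
    refine lt_of_le_of_lt (H l hl ξ 0 le_rfl hM.le fun y hy => ?_) (half_lt_self hσ)
    have hy' : S / l ≤ y := by linarith [hy.1]
    rw [div_le_iff₀ hl] at hy'
    exact (hS (l * y) (by linarith)).le
  -- uniform Cauchy property
  have cauchy : ∀ σ, 0 < σ → ∃ Λ, 0 < Λ ∧ ∀ l, Λ ≤ l → ∀ k, Λ ≤ k → ∀ ξ,
      |w (l * ξ) (l ^ 2) - w (k * ξ) (k ^ 2)| ≤ σ := by
    intro σ hσ
    obtain ⟨ρ, η, hρ, hη, H⟩ := stab_abs hm hM hσ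
    set ε := η / (8 * ρ) with hε
    have hεpos : 0 < ε := by positivity
    set κ := η / (8 * M) with hκ
    have hκpos : 0 < κ := by positivity
    obtain ⟨S1, hS1⟩ := eventually_atBot.1 ((Metric.tendsto_nhds.1 hbot) ε hεpos)
    obtain ⟨S2, hS2⟩ := eventually_atTop.1 ((Metric.tendsto_nhds.1 htop) ε hεpos)
    set S := max (max (-S1) S2) 1 with hS
    have hSpos : 0 < S := lt_of_lt_of_le one_pos (le_max_right _ _)
    have hSS1 : -S1 ≤ S := (le_max_left _ _).trans (le_max_left _ _)
    have hSS2 : S2 ≤ S := (le_max_right _ _).trans (le_max_left _ _)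
    have far1 : ∀ l, S / κ ≤ l → ∀ y, y < -κ → |w₀ (l * y) - K| ≤ ε := by
      intro l hl y hy
      rw [div_le_iff₀ hκpos] at hl
      have hlpos : 0 < l := by nlinarith
      exact (hS1 (l * y) (by nlinarith)).le
    have far2 : ∀ l, S / κ ≤ l → ∀ y, κ < y → |w₀ (l * y)| ≤ ε := by
      intro l hl y hy
      rw [div_le_iff₀ hκpos] at hl
      have hlpos : 0 < l := by nlinarith
      have := (hS2 (l * y) (by nlinarith)).le
      rwa [Real.dist_eq, sub_zero] at this
    refine ⟨S / κ, by positivity, fun l hl k hk ξ => ?_⟩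
    have hlpos : 0 < l := lt_of_lt_of_le (by positivity) hl
    have hkpos : 0 < k := lt_of_lt_of_le (by positivity) hk
    obtain ⟨y1, y2, hr⟩ := h.rescale hlpos
    obtain ⟨y3, y4, hr'⟩ := h.rescale hkpos
    have := H _ _ _ _ _ _ _ _ hr hr' (fun s => h0 _) (fun s => h0 _) (fun s => hb _)
      (fun _ => hb _) ξ ?_
    · simpa using this
    have hcc : Continuous fun y => |w₀ (l * y) - w₀ (k * y)| :=
      ((h.c0.comp (continuous_const.mul continuous_id)).sub
        (h.c0.comp (continuous_const.mul continuous_id))).abs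
    have hind : Integrable (indicator (Icc (-κ) κ) fun _ => M) volume :=
      (integrable_indicator_iff measurableSet_Icc).2 (by simp)
    have hpt : ∀ y, |w₀ (l * y) - w₀ (k * y)| ≤ 2 * ε + indicator (Icc (-κ) κ) (fun _ => M) y := by
      intro y
      by_cases hy : y ∈ Icc (-κ) κ
      · rw [indicator_of_mem hy, abs_sub_le_iff]
        have a1 := h0 (l * y)
        have a2 := h0 (k * y)
        have a3 := hb (l * y)
        have a4 := hb (k * y)
        constructor <;> linarith
      · rw [indicator_of_notMem hy]
        rcases lt_or_ge y (-κ) with h1 | h1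
        · have a1 := abs_le.1 (far1 l hl y h1)
          have a2 := abs_le.1 (far1 k hk y h1)
          rw [abs_sub_le_iff]
          constructor <;> linarith [a1.1, a1.2, a2.1, a2.2]
        · have h2 : κ < y := by
            by_contra h3
            exact hy ⟨h1, not_lt.1 h3⟩
          have a1 := abs_le.1 (far2 l hl y h2)
          have a2 := abs_le.1 (far2 k hk y h2)
          rw [abs_sub_le_iff]
          constructor <;> linarith [a1.1, a1.2, a2.1, a2.2]
    have hab : ξ - ρ ≤ ξ + ρ := by linarith
    have i1 : (∫ y in (ξ - ρ)..(ξ + ρ), |w₀ (l * y) - w₀ (k * y)|)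
        ≤ ∫ y in (ξ - ρ)..(ξ + ρ), (2 * ε + indicator (Icc (-κ) κ) (fun _ => M) y) :=
      intervalIntegral.integral_mono_on hab (hcc.intervalIntegrable _ _)
        (intervalIntegrable_const.add hind.intervalIntegrable) (fun y _ => hpt y)
    rw [intervalIntegral.integral_add intervalIntegrable_const hind.intervalIntegrable,
      intervalIntegral.integral_const, smul_eq_mul] at i1
    have i2 : (∫ y in (ξ - ρ)..(ξ + ρ), indicator (Icc (-κ) κ) (fun _ => M) y) ≤ 2 * κ * M := by
      rw [intervalIntegral.integral_of_le hab]
      refine (setIntegral_le_integral hind (Eventually.of_forall fun y =>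
        indicator_nonneg (fun _ _ => hM.le) y)).trans (le_of_eq ?_)
      rw [integral_indicator_const _ measurableSet_Icc, smul_eq_mul, Real.volume_real_Icc_of_le (by linarith)]
      ring
    have e1 : (ξ + ρ - (ξ - ρ)) * (2 * ε) = η / 2 := by rw [hε]; field_simp; ring
    have e2 : 2 * κ * M = η / 4 := by rw [hκ]; field_simp; ring
    linarith
  -- the limit profile
  have hex : ∀ ξ, ∃ y, Tendsto (fun l : ℝ => w (l * ξ) (l ^ 2)) atTop (𝓝 y) := by
    intro ξ
    apply cauchySeq_tendsto_of_complete
    rw [Metric.cauchySeq_iff]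
    intro σ hσ
    obtain ⟨Λ, -, hΛ⟩ := cauchy (σ / 2) (by linarith)
    exact ⟨Λ, fun l hl k hk => lt_of_le_of_lt (hΛ l hl k hk ξ) (half_lt_self hσ)⟩
  choose f hf using hex
  have unif : ∀ σ, 0 < σ → ∃ Λ, 0 < Λ ∧ ∀ l, Λ ≤ l → ∀ ξ, |w (l * ξ) (l ^ 2) - f ξ| ≤ σ := by
    intro σ hσ
    obtain ⟨Λ, hp, hΛ⟩ := cauchy σ hσ
    refine ⟨Λ, hp, fun l hl ξ => ?_⟩
    refine le_of_tendsto ((tendsto_const_nhds.sub (hf ξ)).abs) ?_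
    filter_upwards [eventually_ge_atTop Λ] with k hk
    exact hΛ l hl k hk ξ
  have limf : ∀ (F : Filter ℝ) (c : ℝ),
      (∀ l, 0 < l → Tendsto (fun ξ => w (l * ξ) (l ^ 2)) F (𝓝 c)) → Tendsto f F (𝓝 c) := by
    intro F c hF
    rw [Metric.tendsto_nhds]
    intro σ hσ
    obtain ⟨Λ, hp, hΛ⟩ := unif (σ / 2) (by linarith)
    filter_upwards [Metric.tendsto_nhds.1 (hF Λ hp) (σ / 2) (by linarith)] with ξ hξ
    rw [Real.dist_eq] at hξ ⊢
    have a1 := abs_le.1 (hΛ Λ le_rfl ξ)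
    have a2 := abs_lt.1 hξ
    rw [abs_lt]
    constructor <;> linarith [a1.1, a1.2, a2.1, a2.2]
  refine ⟨f, ?_, fun ξ => ge_of_tendsto (hf ξ) (Eventually.of_forall fun l => h.nonneg _ _),
    limf _ _ limbot, limf _ _ limtop, unif, ?_⟩
  · have hu : TendstoUniformly (fun (l : ℝ) ξ => w (l * ξ) (l ^ 2)) f atTop := by
      rw [Metric.tendstoUniformly_iff]
      intro σ hσ
      obtain ⟨Λ, hp, hΛ⟩ := unif (σ / 2) (by linarith)
      filter_upwards [eventually_ge_atTop Λ] with l hl ξ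
      rw [dist_comm, Real.dist_eq]
      exact lt_of_le_of_lt (hΛ l hl ξ) (half_lt_self hσ)
    refine hu.continuous (Eventually.frequently ?_)
    filter_upwards [eventually_gt_atTop 0] with l hl
    exact (hwc (l ^ 2) (by positivity)).comp (continuous_const.mul continuous_id)
  · intro t ht
    have hsq : 0 < √t := Real.sqrt_pos.2 ht
    have hd : Tendsto (fun s : ℝ => s / √t) atBot atBot := tendsto_id.atBot_div_const hsq
    refine ((limbot (√t) hsq).comp hd).congr fun s => ?_
    simp only [Function.comp]
    rw [mul_div_cancel₀ _ hsq.ne', Real.sq_sqrt ht.le]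

/-- **Theorem 1.2 (N = 2, `u₀(0) = K > 0`).** Let `m > 1` and let `u` (radial
representative `v`) be a radial very weak solution of `|x|^{-2} ∂ₜ u = Δ(u^m)` in
`ℝ² × (0,∞)` with radially symmetric datum `u₀ ∈ L^∞ ∩ C`, `u₀ ≥ 0`, `u₀(0) = K > 0`
and `u₀(x) → 0` as `|x| → ∞`.  Then there is a continuous profile `f : ℝ → [0,∞)` with
`f(ξ) → K` as `ξ → -∞` and `f(ξ) → 0` as `ξ → +∞` such that, with
`W(x,t) = f(log|x|/√t)` for `x ≠ 0` and `W(0,t) = K`, one has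
`sup_{x ∈ ℝ²} |u(x,t) - W(x,t)| → 0` as `t → ∞`; in particular `u(0,t) = K` for all
`t > 0`. -/
theorem asymptotics_N2_positive_data
    (m K : ℝ) (hm : 1 < m) (hK : 0 < K) (v : ℝ → ℝ → ℝ) (v₀ : ℝ → ℝ)
    (hsol : IsRadialVeryWeakSolution 2 m v v₀)
    (hv₀cont : Continuous v₀)
    (hv₀bdd : ∃ C : ℝ, ∀ r, v₀ r ≤ C)
    (hv₀nonneg : ∀ r, 0 ≤ v₀ r)
    (hv₀K : v₀ 0 = K)
    (hv₀lim : Tendsto v₀ atTop (𝓝 0)) :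
    ∃ f : ℝ → ℝ, Continuous f ∧ (∀ ξ, 0 ≤ f ξ) ∧
      Tendsto f atBot (𝓝 K) ∧ Tendsto f atTop (𝓝 0) ∧
      Tendsto (fun t : ℝ => ⨆ r : {r : ℝ // 0 ≤ r},
          |v r.1 t - (if r.1 = 0 then K else f (Real.log r.1 / Real.sqrt t))|)
        atTop (𝓝 0) ∧
      (∀ t : ℝ, 0 < t → v 0 t = K) := by
  obtain ⟨z, z1, hP⟩ := toPSol hm hsol hv₀cont
  obtain ⟨C, hC⟩ := hv₀bdd
  have hM : 0 < C := by
    have := hC 0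
    rw [hv₀K] at this
    linarith
  have hbot : Tendsto (fun s => v₀ (Real.exp s)) atBot (𝓝 K) := by
    have := (hv₀cont.tendsto 0).comp Real.tendsto_exp_atBot
    rwa [hv₀K] at this
  obtain ⟨f, fc, f0, fbot, ftop, hunif, hlim⟩ := asymp hm hK.le hM hP (fun t ht => w_cont_s hsol ht)
    (fun s => hv₀nonneg _) (fun s => hC _) hbot (hv₀lim.comp Real.tendsto_exp_atTop)
  have horig : ∀ t : ℝ, 0 < t → v 0 t = K := by
    intro t ht
    have hc : ContinuousOn (fun r => v r t) (Set.Ici 0) :=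
      hsol.2.1.comp (f := fun r : ℝ => (r, t)) (by fun_prop) (fun r hr => ⟨hr, ht⟩)
    have h1 : Tendsto (fun s : ℝ => v (Real.exp s) t) atBot (𝓝 (v 0 t)) := by
      have h2 : Tendsto (fun s : ℝ => Real.exp s) atBot (𝓝[Set.Ici 0] 0) :=
        tendsto_nhdsWithin_iff.2 ⟨Real.tendsto_exp_atBot,
          Eventually.of_forall fun s => (Real.exp_pos s).le⟩
      exact Tendsto.comp (hc 0 (by simp)) h2
    exact tendsto_nhds_unique h1 (hlim t ht)
  refine ⟨f, fc, f0, fbot, ftop, ?_, horig⟩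
  rw [Metric.tendsto_nhds]
  intro σ hσ
  obtain ⟨Λ, hp, hΛ⟩ := hunif (σ / 2) (by linarith)
  filter_upwards [eventually_ge_atTop (Λ ^ 2)] with t ht
  have htpos : 0 < t := lt_of_lt_of_le (by positivity) ht
  have hsq : 0 < √t := Real.sqrt_pos.2 htpos
  have hΛt : Λ ≤ √t := Real.le_sqrt_of_sq_le ht
  have hle : (⨆ r : {r : ℝ // 0 ≤ r},
      |v r.1 t - (if r.1 = 0 then K else f (Real.log r.1 / Real.sqrt t))|) ≤ σ / 2 := by
    refine Real.iSup_le ?_ (by linarith)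
    rintro ⟨r, hr⟩
    by_cases h0 : r = 0
    · simp only [h0, if_true, horig t htpos, sub_self, abs_zero]
      linarith
    · have hrpos : 0 < r := lt_of_le_of_ne hr (Ne.symm h0)
      have := hΛ (√t) hΛt (Real.log r / √t)
      rw [mul_div_cancel₀ _ hsq.ne', Real.sq_sqrt htpos.le, Real.exp_log hrpos] at this
      simpa only [h0, if_false] using this
  have hge : 0 ≤ (⨆ r : {r : ℝ // 0 ≤ r},
      |v r.1 t - (if r.1 = 0 then K else f (Real.log r.1 / Real.sqrt t))|) :=
    Real.iSup_nonneg fun _ => abs_nonneg _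
  rw [Real.dist_eq, sub_zero, abs_of_nonneg hge]
  linarith
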